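/- Let λ : ℤ₊ → ℝ satisfy (UB). Fix t ≥ 0 and N ≥ 1 and set Δ_N = (0,1,…,N−1) ∈ W^N. Define M_N^t on GT_N by M_N^t(x^{(1)},…,x^{(N)}) = 𝔓_t^N(Δ_N, x^{(N)}) · 𝔏_{N−1}^N(x^{(N)}, x^{(N−1)}) ⋯ 𝔏_1^2(x^{(2)}, x^{(1)}). Then M_N^t is a probability measure on GT_N and its point configuration has determinantal correlation functions: for any k ≥ 1 and distinct points z_1=(n_1,u_1),…,z_k=(n_k,u_k) ∈ {1,…,N}×ℤ₊, the M_N^t-probability of the set of (x^{(1)},…,x^{(N)}) ∈ GT_N such that for every i the value u_i occurs among the coordinates of x^{(n_i)} equals det[K_t(z_i,z_j)]_{i,j=1}^k, where K_t(n_1,u_1;n_2,u_2) = 1(n_2 > n_1)·(1/λ(u_1))·(1/(2πi)) ∮_{C_λ} ψ_{u_1}(w) p_{u_2}(w) w^{n_1−n_2} dw − (1/λ(u_1))·(1/(2πi))² ∮_{C_λ} dw ∮_{C_0} du ψ_{u_1}(w) p_{u_2}(u) e^{−t(w−u)} (w^{n_1−n_2}/u^{n_2}) · (w^{n_2}−u^{n_2})/(w−u),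 with C_λ the counterclockwise circle |w| = R (R > M fixed) and C_0 the counterclockwise circle |u| = r for any fixed 0 < r < s (note (w^{n_2}−u^{n_2})/(w−u) is the polynomial Σ_{m=0}^{n_2−1} w^m u^{n_2−1−m}, so the integrand has no pole at w = u). -/

import Mathlib

open Complex MeasureTheory Finset
open scoped Real ComplexOrder

/-- ψ_x(w) = ∏_{k=0}^{x} λ(k)/(λ(k)−w). -/
noncomputable def psiF (lam : ℕ → ℝ) (x : ℕ) (w : ℂ) : ℂ :=
  ∏ k ∈ Finset.range (x + 1), (lam k : ℂ) / ((lam k : ℂ) - w)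

/-- p_x(w) = ∏_{k=0}^{x−1} (λ(k)−w)/λ(k). -/
noncomputable def pF (lam : ℕ → ℝ) (x : ℕ) (w : ℂ) : ℂ :=
  ∏ k ∈ Finset.range x, (((lam k : ℂ) - w) / (lam k : ℂ))

/-- e^{tL}(x,y) := −(1/λ(y))·(1/(2πi)) ∮_{|w|=R} ψ_y(w) p_x(w) e^{−tw} dw,
the contour being the counterclockwise circle of radius R centred at 0. -/
noncomputable def eL (lam : ℕ → ℝ) (R t : ℝ) (x y : ℕ) : ℂ :=
  -(1 / (lam y : ℂ)) * ((2 * (Real.pi : ℂ) * Complex.I)⁻¹ *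
    ∮ w in C(0, R), psiF lam y w * pF lam x w * Complex.exp (-(t : ℂ) * w))

/-- y ≺ x : interlacing, x_1 ≤ y_1 < x_2 ≤ y_2 < ⋯ ≤ y_N < x_{N+1}.
(Membership of (y,x) in W^{N,N+1} is exactly this condition.) -/
def Interlace {N : ℕ} (y : Fin N → ℕ) (x : Fin (N + 1) → ℕ) : Prop :=
  ∀ i : Fin N, x i.castSucc ≤ y i ∧ y i < x i.succ

instance {N : ℕ} (y : Fin N → ℕ) (x : Fin (N + 1) → ℕ) : Decidable (Interlace y x) :=
  inferInstanceAs (Decidable (∀ i : Fin N, x i.castSucc ≤ y i ∧ y i < x i.succ))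

/-- 𝔥_N, defined recursively: 𝔥_1 ≡ 1 and 𝔥_{N+1}(x) = Σ_{y ≺ x} ∏ λ(y_i)⁻¹ 𝔥_N(y)
(so 𝔥_1(x) = 1 since the empty interlacing condition is vacuous and the unique
y : Fin 0 → ℕ contributes the empty product). -/
noncomputable def hfun (lam : ℕ → ℝ) : (N : ℕ) → (Fin N → ℕ) → ℝ
  | 0, _ => 1
  | (N + 1), x => ∑' y : { y : Fin N → ℕ // Interlace y x },
      (∏ i, (lam (y.1 i))⁻¹) * hfun lam N y.1

/-- 𝔓_t^N(x,y) = (𝔥_N(y)/𝔥_N(x)) det(e^{tL}(x_i,y_j))_{i,j=1}^N. -/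
noncomputable def frakP (lam : ℕ → ℝ) (R t : ℝ) (N : ℕ) (x y : Fin N → ℕ) : ℂ :=
  ((hfun lam N y / hfun lam N x : ℝ) : ℂ) *
    (Matrix.of fun i j => eL lam R t (x i) (y j)).det

/-- 𝔏_N^{N+1}(x,y) = (𝔥_N(y)/𝔥_{N+1}(x)) ∏ λ(y_i)⁻¹ 1(y ≺ x). -/
noncomputable def frakL (lam : ℕ → ℝ) (N : ℕ) (x : Fin (N + 1) → ℕ) (y : Fin N → ℕ) : ℝ :=
  (hfun lam N y / hfun lam (N + 1) x) * (∏ i, (lam (y i))⁻¹) *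
    (if Interlace y x then 1 else 0)

/-- Gelfand–Tsetlin patterns with N+1 levels: level n (0-based) has n+1 particles. -/
def GTpat (N : ℕ) := (n : Fin (N + 1)) → Fin ((n : ℕ) + 1) → ℕ

/-- A pattern belongs to GT_{N+1}: each level is in its Weyl chamber and consecutive
levels interlace. -/
def IsGT {N : ℕ} (X : GTpat N) : Prop :=
  (∀ n, StrictMono (X n)) ∧ ∀ m : Fin N, Interlace (X m.castSucc) (X m.succ)

/-- The density of the Gibbs measure M_{N+1}^t on GT_{N+1}:
M^t(x^{(1)},…,x^{(N+1)}) = 𝔓_t^{N+1}(Δ_{N+1}, x^{(N+1)}) ∏_{n=1}^{N} 𝔏_n^{n+1}(x^{(n+1)}, x^{(n)}). -/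
noncomputable def dens (lam : ℕ → ℝ) (R t : ℝ) (N : ℕ) (X : GTpat N) : ℂ :=
  frakP lam R t (N + 1) (fun i => (i : ℕ)) (X (Fin.last N)) *
    ((∏ m : Fin N, frakL lam ((m : ℕ) + 1) (X m.succ) (X m.castSucc) : ℝ) : ℂ)

/-- The correlation kernel K_t(n₁,u₁;n₂,u₂), with C_λ the circle |w| = R and
C_0 the circle |u| = r, and (w^{n₂}−u^{n₂})/(w−u) written as the polynomial
Σ_{m=0}^{n₂−1} w^m u^{n₂−1−m}. -/
noncomputable def Kker (lam : ℕ → ℝ) (R r t : ℝ) (n1 u1 n2 u2 : ℕ) : ℂ :=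
  (if n1 < n2 then 1 else 0) * (1 / (lam u1 : ℂ)) *
      ((2 * (Real.pi : ℂ) * Complex.I)⁻¹ *
        ∮ w in C(0, R), psiF lam u1 w * pF lam u2 w * w ^ ((n1 : ℤ) - (n2 : ℤ)))
    - (1 / (lam u1 : ℂ)) *
      ((2 * (Real.pi : ℂ) * Complex.I)⁻¹ *
        ∮ w in C(0, R), ((2 * (Real.pi : ℂ) * Complex.I)⁻¹ *
          ∮ u in C(0, r), psiF lam u1 w * pF lam u2 u *
            Complex.exp (-(t : ℂ) * (w - u)) * w ^ ((n1 : ℤ) - (n2 : ℤ)) *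
            u ^ (-(n2 : ℤ)) * (∑ m ∈ Finset.range n2, w ^ m * u ^ (n2 - 1 - m))))

/-!
Cancelling the factors `𝔥` turns the density into a determinant of contour integrals
`Ψ_{N-i}(x_j)` in the top level times a weight `1 / λ` for every entry below it. Give each of the
sites `z_c` a mass `a_c`, which multiplies the weight of the patterns having an entry there by
`1 + a_c`. Summing the weights of the patterns with a given top level gives a second determinant
in the top level, because summing over interlacing levels amounts to taking differences of partial
sums; its entries are perturbations of `Φ_{N-i}(x_j)`. Andréief's identity sums the product of the
two determinants over the top level. Expanding entire functions in the polynomials `p_x` makes `Ψ`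
and `Φ` biorthogonal, so the result is the determinant of a finite-rank perturbation of the
identity, which equals `det (1 + a K)` for the correlation kernel `K`. Inclusion–exclusion over
`a_c ∈ {0, -1}` extracts `det K`.

The density is nonnegative by the Karlin–McGregor argument in differential form:
`det (e^{tL}(x_i, y_j))` solves a triangular system of forward equations on the Weyl chamber with
nonnegative initial values and sources.
-/

/-! ### Cauchy integrals over circles centred at the origin -/

section CauchyIntegral

open Asymptotics Bornology

/-- The contour integral `(2πi)⁻¹ ∮ f(w) dw` over the counterclockwise circle `|w| = ρ`. -/
noncomputable def cauchyIntegral (ρ : ℝ) (f : ℂ → ℂ) : ℂ :=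
  (2 * (Real.pi : ℂ) * Complex.I)⁻¹ * ∮ w in C(0, ρ), f w

variable {ρ : ℝ} {f g : ℂ → ℂ}

lemma ne_zero_of_norm_eq (hρ : 0 < ρ) {w : ℂ} (hw : ‖w‖ = ρ) : w ≠ 0 :=
  norm_ne_zero_iff.1 (hw ▸ hρ.ne')

lemma cauchyIntegral_congr (hρ : 0 ≤ ρ) (h : ∀ w, ‖w‖ = ρ → f w = g w) :
    cauchyIntegral ρ f = cauchyIntegral ρ g := by
  unfold cauchyIntegral
  rw [circleIntegral.integral_congr hρ fun w hw => h w (by simpa using hw)]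

lemma cauchyIntegral_const_mul (ρ : ℝ) (a : ℂ) (f : ℂ → ℂ) :
    cauchyIntegral ρ (fun w => a * f w) = a * cauchyIntegral ρ f := by
  unfold cauchyIntegral
  rw [circleIntegral.integral_const_mul, mul_left_comm]

lemma cauchyIntegral_sub (hρ : 0 ≤ ρ) (hf : ContinuousOn f (Metric.sphere 0 ρ))
    (hg : ContinuousOn g (Metric.sphere 0 ρ)) :
    cauchyIntegral ρ (fun w => f w - g w) = cauchyIntegral ρ f - cauchyIntegral ρ g := by
  unfold cauchyIntegral
  rw [circleIntegral.integral_sub (hf.circleIntegrable hρ) (hg.circleIntegrable hρ), mul_sub]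

lemma cauchyIntegral_sum {ι : Type*} (hρ : 0 ≤ ρ) {s : Finset ι} {F : ι → ℂ → ℂ}
    (hF : ∀ i ∈ s, ContinuousOn (F i) (Metric.sphere 0 ρ)) :
    cauchyIntegral ρ (fun w => ∑ i ∈ s, F i w) = ∑ i ∈ s, cauchyIntegral ρ (F i) := by
  unfold cauchyIntegral
  rw [circleIntegral.integral_fun_sum fun i hi => (hF i hi).circleIntegrable hρ, Finset.mul_sum]

lemma norm_cauchyIntegral_le {C : ℝ} (hρ : 0 ≤ ρ) (hf : ∀ w, ‖w‖ = ρ → ‖f w‖ ≤ C) :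
    ‖cauchyIntegral ρ f‖ ≤ ρ * C := by
  simpa only [cauchyIntegral, smul_eq_mul] using
    circleIntegral.norm_two_pi_i_inv_smul_integral_le_of_norm_le_const (c := 0) hρ
      fun w hw => hf w (by simpa using hw)

lemma cauchyIntegral_eq_zero_of_differentiable (hρ : 0 ≤ ρ) (hf : Differentiable ℂ f) :
    cauchyIntegral ρ f = 0 := by
  unfold cauchyIntegral
  rw [Complex.circleIntegral_eq_zero_of_differentiable_on_off_countable hρ Set.countable_empty
    hf.continuous.continuousOn fun z _ => hf z, mul_zero]

lemma cauchyIntegral_eq_of_radius_le {R R' : ℝ} (hR : 0 < R) (hRR' : R ≤ R')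
    (hf : ∀ w, R ≤ ‖w‖ → DifferentiableAt ℂ f w) : cauchyIntegral R f = cauchyIntegral R' f := by
  unfold cauchyIntegral
  rw [Complex.circleIntegral_eq_of_differentiable_on_annulus_off_countable hR hRR'
    Set.countable_empty]
  · exact fun z hz => (hf z (by simpa using hz.2)).continuousAt.continuousWithinAt
  · exact fun z hz => hf z (by simpa using (not_le.1 fun h => hz.1.2 (by simpa using h)).le)

/-- Blow the circle up: its length grows like the radius while the integrand is `O(|w|⁻²)`. -/
lemma cauchyIntegral_eq_zero_of_isBigO {R : ℝ} (hR : 0 < R)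
    (hf : ∀ w, R ≤ ‖w‖ → DifferentiableAt ℂ f w) (hO : f =O[cobounded ℂ] fun w => w⁻¹ ^ 2) :
    cauchyIntegral R f = 0 := by
  obtain ⟨C, hC⟩ := hO.bound
  obtain ⟨A, -, hA⟩ := Filter.hasBasis_cobounded_norm.eventually_iff.1 hC
  have hbound : ∀ ρ, max R A ≤ ρ → ‖cauchyIntegral R f‖ ≤ C / ρ := by
    intro ρ h
    have hρ : 0 < ρ := hR.trans_le ((le_max_left _ _).trans h)
    rw [cauchyIntegral_eq_of_radius_le hR ((le_max_left _ _).trans h) hf]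
    refine (norm_cauchyIntegral_le hρ.le (C := C * ρ⁻¹ ^ 2) fun w hw => ?_).trans_eq (by field_simp)
    have := hA (show A ≤ ‖w‖ from hw ▸ (le_max_right _ _).trans h)
    rwa [norm_pow, norm_inv, hw] at this
  have hlim : Filter.Tendsto (fun ρ : ℝ => C / ρ) Filter.atTop (nhds 0) :=
    Filter.tendsto_id.const_div_atTop C
  simpa using ge_of_tendsto hlim ((Filter.eventually_ge_atTop _).mono hbound)

lemma cauchyIntegral_div_sub {h : ℂ → ℂ} (hh : Differentiable ℂ h) {v : ℂ} (hv : ‖v‖ < ρ) :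
    cauchyIntegral ρ (fun w => h w / (w - v)) = h v := by
  have := hh.differentiableOn.circleIntegral_sub_inv_smul (R := ρ) (c := 0) (w := v)
    (by simpa using hv)
  simp only [smul_eq_mul] at this
  simp only [cauchyIntegral, div_eq_inv_mul]
  rw [this, inv_mul_cancel_left₀ Complex.two_pi_I_ne_zero]

lemma cauchyIntegral_zpow (hρ : 0 < ρ) (n : ℤ) :
    cauchyIntegral ρ (fun w => w ^ n) = if n = -1 then 1 else 0 := by
  split_ifs with h
  · subst h
    simpa only [zpow_neg_one, one_div, sub_zero] using
      cauchyIntegral_div_sub (differentiable_const (1 : ℂ)) (v := 0) (by simpa using hρ)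
  · have := circleIntegral.integral_sub_zpow_of_ne h 0 0 ρ
    simp only [sub_zero] at this
    rw [cauchyIntegral, this, mul_zero]

end CauchyIntegral

lemma hasSum_of_norm_sum_range_sub_le {E : Type*} [NormedAddCommGroup E] [CompleteSpace E]
    {f : ℕ → E} {a : E} {C r : ℝ} (hr0 : 0 ≤ r) (hr1 : r < 1)
    (h : ∀ n, ‖∑ i ∈ range n, f i - a‖ ≤ C * r ^ n) : HasSum f a := by
  have hterm : ∀ n, ‖f n‖ ≤ (C * r + C) * r ^ n := fun n => by
    have hf : f n = (∑ i ∈ range (n + 1), f i - a) - (∑ i ∈ range n, f i - a) := by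
      rw [sum_range_succ]; abel
    rw [hf, add_mul, mul_assoc, ← pow_succ']
    exact (norm_sub_le _ _).trans (add_le_add (h _) (h _))
  have hsum : Summable f :=
    .of_norm_bounded ((summable_geometric_of_lt_one hr0 hr1).mul_left _) hterm
  rw [hsum.hasSum_iff_tendsto_nat, tendsto_iff_norm_sub_tendsto_zero]
  refine squeeze_zero (fun _ => norm_nonneg _) h ?_
  simpa using (tendsto_pow_atTop_nhds_zero_of_lt_one hr0 hr1).const_mul C

/-! ### The polynomials `p_x` and the functions `ψ_x` -/

section Polynomials

open Asymptotics Bornology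

variable {lam : ℕ → ℝ} {R : ℝ}

lemma ofReal_rate_ne_zero (hpos : ∀ x, 0 < lam x) (x : ℕ) : (lam x : ℂ) ≠ 0 :=
  Complex.ofReal_ne_zero.2 (hpos x).ne'

lemma ofReal_sub_ne_zero_of_lt_norm {a : ℝ} (ha : 0 < a) {w : ℂ} (h : a < ‖w‖) :
    (a : ℂ) - w ≠ 0 := by
  rw [sub_ne_zero]
  rintro rfl
  exact h.ne' (Complex.norm_of_nonneg ha.le)

@[simp]
lemma pF_zero (lam : ℕ → ℝ) (w : ℂ) : pF lam 0 w = 1 := prod_range_zero _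

lemma pF_succ (lam : ℕ → ℝ) (x : ℕ) (w : ℂ) :
    pF lam (x + 1) w = pF lam x w * (((lam x : ℂ) - w) / (lam x : ℂ)) :=
  prod_range_succ _ _

lemma pF_mul_prod_Ico (lam : ℕ → ℝ) {x y : ℕ} (hxy : x ≤ y) (w : ℂ) :
    pF lam x w * ∏ k ∈ Ico x y, (((lam k : ℂ) - w) / (lam k : ℂ)) = pF lam y w :=
  prod_range_mul_prod_Ico _ hxy

lemma psiF_eq_inv_pF_succ (lam : ℕ → ℝ) (x : ℕ) (w : ℂ) : psiF lam x w = (pF lam (x + 1) w)⁻¹ := by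
  simp only [psiF, pF, ← prod_inv_distrib, inv_div]

@[fun_prop]
lemma differentiable_pF (lam : ℕ → ℝ) (x : ℕ) : Differentiable ℂ (pF lam x) := by
  unfold pF
  fun_prop

@[fun_prop]
lemma continuous_pF (lam : ℕ → ℝ) (x : ℕ) : Continuous (pF lam x) :=
  (differentiable_pF lam x).continuous

lemma pF_ne_zero (hpos : ∀ x, 0 < lam x) {w : ℂ} (hw : ∀ x, lam x < ‖w‖) (x : ℕ) :
    pF lam x w ≠ 0 :=
  prod_ne_zero_iff.2 fun k _ =>
    div_ne_zero (ofReal_sub_ne_zero_of_lt_norm (hpos k) (hw k)) (ofReal_rate_ne_zero hpos k)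

lemma psiF_mul_pF_succ (hpos : ∀ x, 0 < lam x) {w : ℂ} (hw : ∀ x, lam x < ‖w‖) (x : ℕ) :
    psiF lam x w * pF lam (x + 1) w = 1 := by
  rw [psiF_eq_inv_pF_succ, inv_mul_cancel₀ (pF_ne_zero hpos hw _)]

lemma differentiableAt_psiF (hpos : ∀ x, 0 < lam x) {w : ℂ} (hw : ∀ x, lam x < ‖w‖) (x : ℕ) :
    DifferentiableAt ℂ (psiF lam x) w := by
  rw [funext (psiF_eq_inv_pF_succ lam x)]
  exact (differentiable_pF lam (x + 1) w).inv (pF_ne_zero hpos hw _)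

lemma continuousOn_psiF_sphere (hpos : ∀ x, 0 < lam x) (hR : ∀ x, lam x < R) (x : ℕ) :
    ContinuousOn (psiF lam x) (Metric.sphere 0 R) := fun w hw =>
  (differentiableAt_psiF hpos
    (by rwa [mem_sphere_zero_iff_norm.1 hw]) x).continuousAt.continuousWithinAt

lemma sum_pF_div (hpos : ∀ x, 0 < lam x) {v : ℂ} (hv : v ≠ 0) (u : ℕ) :
    ∑ y ∈ range u, pF lam y v / lam y = (1 - pF lam u v) / v := by
  induction u with
  | zero => simp
  | succ u ih =>
    have := ofReal_rate_ne_zero hpos u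
    rw [sum_range_succ, ih, pF_succ]
    field_simp
    ring

lemma sum_pF_mul_psiF (hpos : ∀ x, 0 < lam x) {v w : ℂ} (hw : ∀ x, lam x < ‖w‖) (hvw : v ≠ w)
    (X : ℕ) :
    ∑ x ∈ range X, pF lam x v * psiF lam x w / lam x
      = (pF lam X v / pF lam X w - 1) / (w - v) := by
  have hwv : w - v ≠ 0 := sub_ne_zero.2 hvw.symm
  induction X with
  | zero => simp
  | succ X ih =>
    have h1 := ofReal_rate_ne_zero hpos X
    have h2 := ofReal_sub_ne_zero_of_lt_norm (hpos X) (hw X)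
    have h3 := pF_ne_zero hpos hw X
    rw [sum_range_succ, ih, psiF_eq_inv_pF_succ, pF_succ, pF_succ]
    field_simp
    ring

lemma norm_pF_div_pF_le (hpos : ∀ x, 0 < lam x) (hR : ∀ x, lam x < R) (X : ℕ) {v w : ℂ}
    (hw : 3 * R + 2 * ‖v‖ ≤ ‖w‖) : ‖pF lam X v / pF lam X w‖ ≤ (1 / 2) ^ X := by
  have hfactor : ∀ k, ‖((lam k : ℂ) - v) / ((lam k : ℂ) - w)‖ ≤ 1 / 2 := fun k => by
    have hv : ‖(lam k : ℂ) - v‖ ≤ lam k + ‖v‖ := by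
      simpa only [Complex.norm_of_nonneg (hpos k).le] using norm_sub_le (lam k : ℂ) v
    have hw' : ‖w‖ - lam k ≤ ‖(lam k : ℂ) - w‖ := by
      simpa only [Complex.norm_of_nonneg (hpos k).le, norm_sub_rev] using
        norm_sub_norm_le w (lam k : ℂ)
    have hk := hR k
    rw [norm_div]
    exact div_le_of_le_mul₀ (norm_nonneg _) (by norm_num) (by linarith)
  rw [pF, pF, ← prod_div_distrib, norm_prod, ← card_range X, ← prod_const, card_range]
  refine prod_le_prod (fun _ _ => norm_nonneg _) fun k _ => ?_
  rw [div_div_div_cancel_right₀ (ofReal_rate_ne_zero hpos k)]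
  exact hfactor k

lemma isBigO_inv_pow_of_le {m n : ℕ} (hmn : m ≤ n) :
    (fun w : ℂ => w⁻¹ ^ n) =O[cobounded ℂ] fun w => w⁻¹ ^ m := by
  refine IsBigO.of_bound' ?_
  filter_upwards [eventually_cobounded_le_norm (1 : ℝ)] with w hw
  rw [norm_pow, norm_pow, norm_inv]
  exact pow_le_pow_of_le_one (by positivity) (inv_le_one_of_one_le₀ hw) hmn

lemma isBigO_div_sub (a : ℂ) : (fun w : ℂ => a / (a - w)) =O[cobounded ℂ] fun w => w⁻¹ := by
  refine .of_bound (2 * ‖a‖) ?_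
  filter_upwards [eventually_cobounded_le_norm (max 1 (2 * ‖a‖))] with w hw
  have h1 : 1 ≤ ‖w‖ := (le_max_left _ _).trans hw
  have h2 : 2 * ‖a‖ ≤ ‖w‖ := (le_max_right _ _).trans hw
  have h3 : ‖w‖ / 2 ≤ ‖a - w‖ := by linarith [norm_sub_norm_le w a, norm_sub_rev w a]
  rw [norm_div, norm_inv, ← div_eq_mul_inv, div_le_div_iff₀ (by linarith) (by linarith)]
  nlinarith [norm_nonneg a]

lemma isBigO_prod_div_sub (a : ℕ → ℂ) (S : Finset ℕ) :
    (fun w : ℂ => ∏ k ∈ S, a k / (a k - w)) =O[cobounded ℂ] fun w => w⁻¹ ^ S.card := by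
  simp only [← prod_const]
  exact .finsetProd fun k _ => isBigO_div_sub (a k)

lemma cauchyIntegral_psiF_mul_pF_of_lt (hpos : ∀ x, 0 < lam x) (hR : ∀ x, lam x < R) {x y : ℕ}
    (hxy : x < y) : cauchyIntegral R (fun w => psiF lam y w * pF lam x w) = 0 := by
  have hlt : ∀ w : ℂ, R ≤ ‖w‖ → ∀ k, lam k < ‖w‖ := fun w hw k => (hR k).trans_le hw
  refine cauchyIntegral_eq_zero_of_isBigO ((hpos 0).trans (hR 0)) (fun w hw =>
    (differentiableAt_psiF hpos (hlt w hw) y).mul (differentiable_pF lam x w)) ?_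
  have hprod : (fun w => ∏ k ∈ Ico x (y + 1), (lam k : ℂ) / ((lam k : ℂ) - w))
      =ᶠ[cobounded ℂ] fun w => psiF lam y w * pF lam x w := by
    filter_upwards [eventually_cobounded_le_norm R] with w hw
    have h1 := pF_ne_zero hpos (hlt w hw) x
    rw [psiF_eq_inv_pF_succ, ← pF_mul_prod_Ico lam (show x ≤ y + 1 by lia), mul_inv, mul_right_comm,
      inv_mul_cancel₀ h1, one_mul, ← prod_inv_distrib]
    simp only [inv_div]
  exact ((isBigO_prod_div_sub _ _).trans (isBigO_inv_pow_of_le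
    (by rw [Nat.card_Ico]; lia))).congr' hprod .rfl

lemma cauchyIntegral_psiF_mul_pF_self (hpos : ∀ x, 0 < lam x) (hR : ∀ x, lam x < R) (x : ℕ) :
    cauchyIntegral R (fun w => psiF lam x w * pF lam x w) = -(lam x : ℂ) := by
  have hpole : ‖(lam x : ℂ)‖ < R := (Complex.norm_of_nonneg (hpos x).le).trans_lt (hR x)
  rw [← cauchyIntegral_div_sub (differentiable_const (-(lam x : ℂ))) hpole]
  refine cauchyIntegral_congr ((hpos 0).trans (hR 0)).le fun w hw => ?_
  have h1 := pF_ne_zero hpos (hw ▸ hR) x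
  rw [psiF_eq_inv_pF_succ, pF_succ, mul_inv, inv_div, mul_right_comm, inv_mul_cancel₀ h1, one_mul,
    ← neg_sub (lam x : ℂ) w, neg_div_neg_eq]

lemma cauchyIntegral_psiF_mul_pF_of_gt (hpos : ∀ x, 0 < lam x) (hR : ∀ x, lam x < R) {x y : ℕ}
    (hxy : y < x) : cauchyIntegral R (fun w => psiF lam y w * pF lam x w) = 0 := by
  have hR0 : 0 ≤ R := ((hpos 0).trans (hR 0)).le
  rw [cauchyIntegral_congr hR0
    (g := fun w => ∏ k ∈ Ico (y + 1) x, ((lam k : ℂ) - w) / (lam k : ℂ)) fun w hw => ?_]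
  · exact cauchyIntegral_eq_zero_of_differentiable hR0 (by fun_prop)
  · rw [← pF_mul_prod_Ico lam hxy, ← mul_assoc, psiF_mul_pF_succ hpos (hw ▸ hR), one_mul]

lemma cauchyIntegral_psiF_mul_pF (hpos : ∀ x, 0 < lam x) (hR : ∀ x, lam x < R) (x y : ℕ) :
    cauchyIntegral R (fun w => psiF lam y w * pF lam x w) = if x = y then -(lam y : ℂ) else 0 := by
  rcases lt_trichotomy x y with hxy | rfl | hxy
  · rw [if_neg hxy.ne, cauchyIntegral_psiF_mul_pF_of_lt hpos hR hxy]
  · rw [if_pos rfl, cauchyIntegral_psiF_mul_pF_self hpos hR]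
  · rw [if_neg hxy.ne', cauchyIntegral_psiF_mul_pF_of_gt hpos hR hxy]

lemma cauchyIntegral_psiF_mul_zpow_neg (hpos : ∀ x, 0 < lam x) (hR : ∀ x, lam x < R) (x : ℕ)
    {n : ℤ} (hn : n < 0) : cauchyIntegral R (fun w => psiF lam x w * w ^ n) = 0 := by
  have hR0 : 0 < R := (hpos 0).trans (hR 0)
  obtain ⟨k, rfl⟩ : ∃ k : ℕ, n = -((k + 1 : ℕ) : ℤ) := ⟨(-n).toNat - 1, by lia⟩
  refine cauchyIntegral_eq_zero_of_isBigO hR0 (fun w hw => ?_) ?_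
  · exact (differentiableAt_psiF hpos (fun k => (hR k).trans_le hw) x).mul
      (differentiableAt_zpow.2 (.inl (norm_pos_iff.1 (hR0.trans_le hw))))
  · have hpsi : psiF lam x =O[cobounded ℂ] fun w => w⁻¹ ^ (range (x + 1)).card :=
      isBigO_prod_div_sub (fun k => lam k) _
    simp only [zpow_neg, zpow_natCast, ← inv_pow]
    refine (hpsi.mul (isBigO_refl _ _)).trans ?_
    simp only [card_range, ← pow_add]
    exact isBigO_inv_pow_of_le (by lia)

end Polynomials

/-! ### Expansion of entire functions in the polynomials `p_x` -/

section Moments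

variable {lam : ℕ → ℝ} {R ρ : ℝ}

/-- The moments `(2πi)⁻¹ ∮ p_u(v) q(v) dv` over the circle `|v| = ρ` of a density `q` against the
polynomials `p_u`. -/
noncomputable def pMoment (lam : ℕ → ℝ) (ρ : ℝ) (q : ℂ → ℂ) (u : ℕ) : ℂ :=
  cauchyIntegral ρ fun v => pF lam u v * q v

/-- The moments `-λ(x)⁻¹ (2πi)⁻¹ ∮ ψ_x(w) h(w) dw` over the circle `|w| = R`: the coefficients in
the expansion of an entire function `h` in the polynomials `p_x`. -/
noncomputable def psiMoment (lam : ℕ → ℝ) (R : ℝ) (h : ℂ → ℂ) (x : ℕ) : ℂ :=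
  -(1 / (lam x : ℂ)) * cauchyIntegral R fun w => psiF lam x w * h w

lemma pMoment_congr (lam : ℕ → ℝ) (hρ : 0 ≤ ρ) {q q' : ℂ → ℂ} (h : ∀ v, ‖v‖ = ρ → q v = q' v)
    (u : ℕ) : pMoment lam ρ q u = pMoment lam ρ q' u :=
  cauchyIntegral_congr hρ fun v hv => by rw [h v hv]

lemma psiMoment_sum (hpos : ∀ x, 0 < lam x) (hR : ∀ x, lam x < R) {ι : Type*} (s : Finset ι)
    (c : ι → ℂ) {h : ι → ℂ → ℂ} (hh : ∀ i ∈ s, ContinuousOn (h i) (Metric.sphere 0 R)) (x : ℕ) :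
    psiMoment lam R (fun w => ∑ i ∈ s, c i * h i w) x = ∑ i ∈ s, c i * psiMoment lam R (h i) x := by
  have hR0 : 0 ≤ R := ((hpos 0).trans (hR 0)).le
  have hψ := continuousOn_psiF_sphere hpos hR x
  simp only [psiMoment, mul_sum]
  rw [cauchyIntegral_sum hR0 fun i hi => hψ.fun_mul (continuousOn_const.fun_mul (hh i hi)), mul_sum]
  refine sum_congr rfl fun i _ => ?_
  simp only [mul_left_comm _ (c i)]
  rw [cauchyIntegral_const_mul, mul_left_comm]

lemma psiMoment_eq_of_radius_le (hpos : ∀ x, 0 < lam x) (hR : ∀ x, lam x < R) {R' : ℝ}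
    (hRR' : R ≤ R') {h : ℂ → ℂ} (hh : Differentiable ℂ h) (x : ℕ) :
    psiMoment lam R h x = psiMoment lam R' h x := by
  rw [psiMoment, psiMoment,
    cauchyIntegral_eq_of_radius_le ((hpos 0).trans (hR 0)) hRR' fun w hw =>
      (differentiableAt_psiF hpos (fun k => (hR k).trans_le hw) x).fun_mul (hh w)]

lemma sum_range_pF_mul_psiMoment (hpos : ∀ x, 0 < lam x) (hR : ∀ x, lam x < R) {h : ℂ → ℂ}
    (hh : ContinuousOn h (Metric.sphere 0 R)) {v : ℂ} (hv : ‖v‖ < R) (X : ℕ) :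
    ∑ x ∈ range X, pF lam x v * psiMoment lam R h x
      = cauchyIntegral R fun w => h w * (1 - pF lam X v / pF lam X w) / (w - v) := by
  have hR0 : 0 ≤ R := (norm_nonneg v).trans hv.le
  calc ∑ x ∈ range X, pF lam x v * psiMoment lam R h x
      = ∑ x ∈ range X, cauchyIntegral R fun w => -(pF lam x v / lam x) * (psiF lam x w * h w) :=
        sum_congr rfl fun x _ => by rw [cauchyIntegral_const_mul, psiMoment]; ring
    _ = cauchyIntegral R fun w => ∑ x ∈ range X, -(pF lam x v / lam x) * (psiF lam x w * h w) :=
        (cauchyIntegral_sum hR0 fun x _ => continuousOn_const.mul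
          ((continuousOn_psiF_sphere hpos hR x).mul hh)).symm
    _ = _ := cauchyIntegral_congr hR0 fun w hw => by
        have hvw : v ≠ w := by rintro rfl; exact hv.ne hw
        calc ∑ x ∈ range X, -(pF lam x v / lam x) * (psiF lam x w * h w)
            = -h w * ∑ x ∈ range X, pF lam x v * psiF lam x w / lam x := by
              rw [mul_sum]; exact sum_congr rfl fun x _ => by ring
          _ = _ := by rw [sum_pF_mul_psiF hpos (hw ▸ hR) hvw]; ring

/-- The remainder formula of Newton interpolation at the nodes `λ(0), …, λ(X - 1)`. -/
lemma sub_sum_range_pF_mul_psiMoment (hpos : ∀ x, 0 < lam x) (hR : ∀ x, lam x < R) {h : ℂ → ℂ}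
    (hh : Differentiable ℂ h) {v : ℂ} (hv : ‖v‖ < R) (X : ℕ) :
    h v - ∑ x ∈ range X, pF lam x v * psiMoment lam R h x
      = cauchyIntegral R fun w => h w * (pF lam X v / pF lam X w) / (w - v) := by
  have hR0 : 0 ≤ R := (norm_nonneg v).trans hv.le
  have hsub : ∀ w ∈ Metric.sphere (0 : ℂ) R, w - v ≠ 0 := fun w hw h0 =>
    hv.ne (sub_eq_zero.1 h0 ▸ mem_sphere_zero_iff_norm.1 hw)
  have hpF : ∀ w ∈ Metric.sphere (0 : ℂ) R, pF lam X w ≠ 0 := fun w hw =>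
    pF_ne_zero hpos (by rwa [mem_sphere_zero_iff_norm.1 hw]) X
  have hcont := hh.continuous.continuousOn (s := Metric.sphere 0 R)
  rw [sum_range_pF_mul_psiMoment hpos hR hcont hv, ← cauchyIntegral_div_sub hh hv,
    ← cauchyIntegral_sub hR0 (hcont.div₀ (by fun_prop) hsub)]
  · exact cauchyIntegral_congr hR0 fun w _ => by ring
  · exact (hcont.mul (continuousOn_const.sub (continuousOn_const.div₀
      (continuous_pF lam X).continuousOn hpF))).div₀ (by fun_prop) hsub

lemma exists_norm_le_on_sphere {q : ℂ → ℂ} (hq : ContinuousOn q (Metric.sphere 0 ρ)) :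
    ∃ C, 0 ≤ C ∧ ∀ v, ‖v‖ = ρ → ‖q v‖ ≤ C := by
  obtain ⟨C, hC⟩ := (isCompact_sphere (0 : ℂ) ρ).exists_bound_of_continuousOn hq
  exact ⟨max C 0, le_max_right _ _, fun v hv => (hC v (by simpa using hv)).trans (le_max_left _ _)⟩

/-- On the larger circle `|w| = 3R + 2ρ` each factor `(λ(k) - v) / (λ(k) - w)` of the remainder is
at most `1 / 2`. -/
lemma exists_norm_sub_sum_pF_mul_psiMoment_le (hpos : ∀ x, 0 < lam x) (hR : ∀ x, lam x < R)
    {h : ℂ → ℂ} (hh : Differentiable ℂ h) (hρ : 0 ≤ ρ) :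
    ∃ C, ∀ X v, ‖v‖ = ρ →
      ‖h v - ∑ x ∈ range X, pF lam x v * psiMoment lam R h x‖ ≤ C * (1 / 2) ^ X := by
  have hR0 : 0 < R := (hpos 0).trans (hR 0)
  obtain ⟨C, hC0, hC⟩ :=
    exists_norm_le_on_sphere (ρ := 3 * R + 2 * ρ) hh.continuous.continuousOn
  refine ⟨(3 * R + 2 * ρ) * (C / (3 * R + ρ)), fun X v hv => ?_⟩
  simp only [psiMoment_eq_of_radius_le hpos hR (show R ≤ 3 * R + 2 * ρ by linarith) hh]
  rw [sub_sum_range_pF_mul_psiMoment hpos (fun x => (hR x).trans (by linarith)) hh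
    (by linarith)]
  refine (norm_cauchyIntegral_le (by positivity) (C := C * (1 / 2) ^ X / (3 * R + ρ))
    fun w hw => ?_).trans_eq (by ring)
  have hwv : 3 * R + ρ ≤ ‖w - v‖ := by linarith [norm_sub_norm_le w v]
  rw [norm_div, norm_mul]
  gcongr
  · exact hC w hw
  · exact norm_pF_div_pF_le hpos hR X (by rw [hw, hv])

lemma hasSum_pMoment_mul_psiMoment (hpos : ∀ x, 0 < lam x) (hR : ∀ x, lam x < R) {h : ℂ → ℂ}
    (hh : Differentiable ℂ h) (hρ : 0 ≤ ρ) {q : ℂ → ℂ} (hq : ContinuousOn q (Metric.sphere 0 ρ)) :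
    HasSum (fun x => pMoment lam ρ q x * psiMoment lam R h x)
      (cauchyIntegral ρ fun v => q v * h v) := by
  obtain ⟨D, hD⟩ := exists_norm_sub_sum_pF_mul_psiMoment_le hpos hR hh hρ
  obtain ⟨E, hE0, hE⟩ := exists_norm_le_on_sphere hq
  refine hasSum_of_norm_sum_range_sub_le (C := ρ * (E * D)) (r := 1 / 2) (by norm_num)
    (by norm_num) fun X => ?_
  have hterm : ∀ x, ContinuousOn (fun v => psiMoment lam R h x * (pF lam x v * q v))
      (Metric.sphere 0 ρ) := fun x =>
    continuousOn_const.mul ((continuous_pF lam x).continuousOn.mul hq)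
  have hdiff : ∑ x ∈ range X, pMoment lam ρ q x * psiMoment lam R h x
        - cauchyIntegral ρ (fun v => q v * h v)
      = cauchyIntegral ρ fun v =>
        -q v * (h v - ∑ x ∈ range X, pF lam x v * psiMoment lam R h x) := by
    simp only [pMoment, mul_comm (cauchyIntegral _ _), ← cauchyIntegral_const_mul]
    rw [← cauchyIntegral_sum hρ fun x _ => hterm x, ← cauchyIntegral_sub hρ
      (continuousOn_finsetSum _ fun x _ => hterm x) (hq.fun_mul hh.continuous.continuousOn)]
    refine cauchyIntegral_congr hρ fun v _ => ?_
    rw [mul_sub, mul_sum, sub_eq_neg_add, neg_mul, sub_eq_add_neg, ← sum_neg_distrib]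
    exact congr_arg _ (sum_congr rfl fun x _ => by ring)
  rw [hdiff, mul_assoc ρ, mul_assoc E]
  refine norm_cauchyIntegral_le hρ fun v hv => ?_
  rw [norm_mul, norm_neg]
  exact mul_le_mul (hE v hv) (hD X v hv) (norm_nonneg _) hE0

lemma continuousOn_zpow_sphere (hρ : 0 < ρ) (n : ℤ) :
    ContinuousOn (fun v : ℂ => v ^ n) (Metric.sphere 0 ρ) :=
  continuousOn_id.zpow₀ n fun v hv => .inl (ne_zero_of_norm_eq hρ (by simpa using hv))

lemma pMoment_div_id (hpos : ∀ x, 0 < lam x) (hρ : 0 < ρ) {q : ℂ → ℂ}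
    (hq : ContinuousOn q (Metric.sphere 0 ρ)) (u : ℕ) :
    pMoment lam ρ (fun v => q v / v) u
      = pMoment lam ρ (fun v => q v / v) 0 - ∑ y ∈ range u, pMoment lam ρ q y / lam y := by
  have hpq : ∀ x, ContinuousOn (fun v => pF lam x v * (q v / v)) (Metric.sphere 0 ρ) := fun x =>
    (continuous_pF lam x).continuousOn.mul <|
      hq.div₀ continuousOn_id fun v hv => ne_zero_of_norm_eq hρ (by simpa using hv)
  rw [eq_sub_iff_add_eq, ← eq_sub_iff_add_eq']
  simp only [pMoment, div_eq_inv_mul _ (lam _ : ℂ), ← cauchyIntegral_const_mul]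
  rw [← cauchyIntegral_sub hρ.le (hpq 0) (hpq u), ← cauchyIntegral_sum hρ.le fun y _ =>
    continuousOn_const.fun_mul ((continuous_pF lam y).continuousOn.fun_mul hq)]
  refine cauchyIntegral_congr hρ.le fun v hv => ?_
  calc ∑ y ∈ range u, (lam y : ℂ)⁻¹ * (pF lam y v * q v)
      = q v * ∑ y ∈ range u, pF lam y v / lam y := by
        rw [mul_sum]; exact sum_congr rfl fun y _ => by ring
    _ = _ := by rw [sum_pF_div hpos (ne_zero_of_norm_eq hρ hv), pF_zero]; ring

end Moments

/-! ### The correlation kernel -/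

section KernelFunctions

variable {lam : ℕ → ℝ} {R r : ℝ}

/-- `Ψ_m(x) = -λ(x)⁻¹ (2πi)⁻¹ ∮ ψ_x(w) w ^ m e^{-tw} dw`, the functions whose determinant is the
top level weight and which are biorthogonal to `kerPhi`. -/
noncomputable def kerPsi (lam : ℕ → ℝ) (R t : ℝ) (m : ℤ) (x : ℕ) : ℂ :=
  psiMoment lam R (fun w => w ^ m * Complex.exp (-(t : ℂ) * w)) x

/-- `Φ_m(u) = (2πi)⁻¹ ∮ p_u(v) e^{tv} v ^ (-m-1) dv`, the functions biorthogonal to `kerPsi`. -/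
noncomputable def kerPhi (lam : ℕ → ℝ) (r t : ℝ) (m : ℤ) (u : ℕ) : ℂ :=
  pMoment lam r (fun v => Complex.exp ((t : ℂ) * v) * v ^ (-m - 1)) u

/-- `λ(x)⁻¹ (2πi)⁻¹ ∮ ψ_x(w) p_u(w) w ^ (-k) dw`, the first term of the correlation kernel for two
levels at distance `k`: up to sign, `k`-fold summation over interlacing levels from `x` to `u`. -/
noncomputable def kerTrans (lam : ℕ → ℝ) (R : ℝ) (k : ℕ) (x u : ℕ) : ℂ :=
  1 / (lam x : ℂ) * pMoment lam R (fun v => psiF lam x v * v ^ (-(k : ℤ))) u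

lemma kerPhi_of_neg (lam : ℕ → ℝ) (hr : 0 ≤ r) (t : ℝ) {m : ℤ} (hm : m < 0) (u : ℕ) :
    kerPhi lam r t m u = 0 := by
  obtain ⟨n, hn⟩ := Int.eq_ofNat_of_zero_le (show 0 ≤ -m - 1 by lia)
  simp only [kerPhi, pMoment, hn, zpow_natCast]
  exact cauchyIntegral_eq_zero_of_differentiable hr (by fun_prop)

lemma kerPhi_zero_zero (lam : ℕ → ℝ) (hr : 0 < r) (t : ℝ) : kerPhi lam r t 0 0 = 1 := by
  have := cauchyIntegral_div_sub (h := fun v => Complex.exp ((t : ℂ) * v)) (by fun_prop)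
    (v := 0) (by simpa using hr)
  simpa [kerPhi, pMoment, div_eq_mul_inv] using this

lemma continuousOn_exp_mul_zpow (hr : 0 < r) (t : ℂ) (n : ℤ) :
    ContinuousOn (fun v : ℂ => Complex.exp (t * v) * v ^ n) (Metric.sphere 0 r) :=
  ContinuousOn.mul (by fun_prop) (continuousOn_zpow_sphere hr n)

lemma continuousOn_psiF_mul_zpow (hpos : ∀ x, 0 < lam x) (hR : ∀ x, lam x < R) (x : ℕ) (n : ℤ) :
    ContinuousOn (fun v => psiF lam x v * v ^ n) (Metric.sphere 0 R) :=
  (continuousOn_psiF_sphere hpos hR x).mul (continuousOn_zpow_sphere ((hpos 0).trans (hR 0)) n)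

lemma kerPhi_succ (hpos : ∀ x, 0 < lam x) (hr : 0 < r) (t : ℝ) (m : ℤ) (u : ℕ) :
    kerPhi lam r t (m + 1) u
      = kerPhi lam r t (m + 1) 0 - ∑ y ∈ range u, kerPhi lam r t m y / lam y := by
  have hdiv : ∀ u, kerPhi lam r t (m + 1) u
      = pMoment lam r (fun v => Complex.exp ((t : ℂ) * v) * v ^ (-m - 1) / v) u :=
    pMoment_congr lam hr.le fun v hv => by
      rw [show -(m + 1) - 1 = -m - 1 - 1 by ring, zpow_sub_one₀ (ne_zero_of_norm_eq hr hv) (-m - 1)]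
      ring
  rw [hdiv, hdiv, pMoment_div_id hpos hr (continuousOn_exp_mul_zpow hr t _)]
  rfl

lemma kerTrans_zero (hpos : ∀ x, 0 < lam x) (hR : ∀ x, lam x < R) (x u : ℕ) :
    kerTrans lam R 0 x u = if u = x then -1 else 0 := by
  have hx := ofReal_rate_ne_zero hpos x
  simp only [kerTrans, pMoment, Nat.cast_zero, neg_zero, zpow_zero, mul_one, mul_comm (pF lam u _),
    cauchyIntegral_psiF_mul_pF hpos hR]
  split_ifs
  · field_simp
  · rw [mul_zero]

lemma kerTrans_succ (hpos : ∀ x, 0 < lam x) (hR : ∀ x, lam x < R) (k x u : ℕ) :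
    kerTrans lam R (k + 1) x u = -∑ y ∈ range u, kerTrans lam R k x y / lam y := by
  have hR0 : 0 < R := (hpos 0).trans (hR 0)
  have hdiv : ∀ u, pMoment lam R (fun v => psiF lam x v * v ^ (-((k + 1 : ℕ) : ℤ))) u
      = pMoment lam R (fun v => psiF lam x v * v ^ (-(k : ℤ)) / v) u :=
    pMoment_congr lam hR0.le fun v hv => by
      rw [show (-((k + 1 : ℕ) : ℤ)) = -(k : ℤ) - 1 by push_cast; ring,
        zpow_sub_one₀ (ne_zero_of_norm_eq hR0 hv)]
      ring
  have hzero : pMoment lam R (fun v => psiF lam x v * v ^ (-((k + 1 : ℕ) : ℤ))) 0 = 0 := by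
    simpa only [pMoment, pF_zero, one_mul] using
      cauchyIntegral_psiF_mul_zpow_neg hpos hR x (show -((k + 1 : ℕ) : ℤ) < 0 by lia)
  rw [kerTrans, hdiv, pMoment_div_id hpos hR0 (continuousOn_psiF_mul_zpow hpos hR x _), ← hdiv,
    hzero, zero_sub, mul_neg, mul_sum]
  simp only [kerTrans, mul_div_assoc]

lemma hasSum_kerPhi_mul_kerPsi (hpos : ∀ x, 0 < lam x) (hR : ∀ x, lam x < R) (hr : 0 < r) (t : ℝ)
    (m n : ℕ) :
    HasSum (fun x => kerPhi lam r t m x * kerPsi lam R t n x) (if m = n then 1 else 0) := by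
  have hval : cauchyIntegral r (fun v => Complex.exp ((t : ℂ) * v) * v ^ (-(m : ℤ) - 1) *
      (v ^ (n : ℤ) * Complex.exp (-(t : ℂ) * v))) = if m = n then 1 else 0 := by
    rw [cauchyIntegral_congr hr.le (g := fun v => v ^ ((n : ℤ) - m - 1)) fun v hv => ?_,
      cauchyIntegral_zpow hr]
    · exact if_congr (by lia) rfl rfl
    · rw [show (n : ℤ) - m - 1 = (-m - 1) + n by ring, zpow_add₀ (ne_zero_of_norm_eq hr hv),
        neg_mul, Complex.exp_neg]
      field_simp
  rw [← hval]
  exact hasSum_pMoment_mul_psiMoment hpos hR (by simp only [zpow_natCast]; fun_prop) hr.le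
    (continuousOn_exp_mul_zpow hr t _)

lemma hasSum_kerTrans_mul_kerPsi (hpos : ∀ x, 0 < lam x) (hR : ∀ x, lam x < R) (t : ℝ)
    (k u n : ℕ) :
    HasSum (fun x => kerTrans lam R k u x * kerPsi lam R t n x)
      (-kerPsi lam R t ((n : ℤ) - k) u) := by
  have hR0 : 0 < R := (hpos 0).trans (hR 0)
  have hval : -kerPsi lam R t ((n : ℤ) - k) u = 1 / (lam u : ℂ) * cauchyIntegral R
      fun v => psiF lam u v * v ^ (-(k : ℤ)) * (v ^ (n : ℤ) * Complex.exp (-(t : ℂ) * v)) := by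
    rw [kerPsi, psiMoment, ← neg_mul, neg_neg]
    refine congr_arg _ (cauchyIntegral_congr hR0.le fun v hv => ?_)
    rw [sub_eq_neg_add, zpow_add₀ (ne_zero_of_norm_eq hR0 hv)]
    ring
  rw [hval]
  simp only [kerTrans, mul_assoc (1 / (lam u : ℂ))]
  exact (hasSum_pMoment_mul_psiMoment hpos hR (by simp only [zpow_natCast]; fun_prop) hR0.le
    (continuousOn_psiF_mul_zpow hpos hR u _)).mul_left _

lemma kernel_integrand_eq_sum (a b : ℂ) (t : ℝ) (l₁ l₂ : ℕ) {w u : ℂ} (hw : w ≠ 0) (hu : u ≠ 0) :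
    a * b * Complex.exp (-(t : ℂ) * (w - u)) * w ^ (((l₁ + 1 : ℕ) : ℤ) - ((l₂ + 1 : ℕ) : ℤ)) *
        u ^ (-((l₂ + 1 : ℕ) : ℤ)) * (∑ m ∈ range (l₂ + 1), w ^ m * u ^ (l₂ + 1 - 1 - m))
      = ∑ j ∈ range (l₂ + 1), a * (w ^ ((l₁ : ℤ) - j) * Complex.exp (-(t : ℂ) * w)) *
          (b * (Complex.exp ((t : ℂ) * u) * u ^ (-((l₂ : ℤ) - j) - 1))) := by
  rw [← sum_range_reflect, mul_sum]
  refine sum_congr rfl fun j hj => ?_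
  have hj : j ≤ l₂ := Nat.lt_succ_iff.1 (mem_range.1 hj)
  have hw' : w ^ ((l₁ : ℤ) - j)
      = w ^ (((l₁ + 1 : ℕ) : ℤ) - ((l₂ + 1 : ℕ) : ℤ)) * w ^ (l₂ - j) := by
    rw [← zpow_natCast w (l₂ - j), ← zpow_add₀ hw]
    congr 1
    lia
  have hu' : u ^ (-((l₂ : ℤ) - j) - 1) = u ^ (-((l₂ + 1 : ℕ) : ℤ)) * u ^ j := by
    rw [← zpow_natCast u j, ← zpow_add₀ hu]
    congr 1
    lia
  have hexp : Complex.exp (-(t : ℂ) * (w - u))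
      = Complex.exp (-(t : ℂ) * w) * Complex.exp ((t : ℂ) * u) := by
    rw [← Complex.exp_add, neg_mul, neg_mul, mul_sub, neg_sub, sub_eq_neg_add]
  rw [Nat.add_sub_cancel, Nat.sub_sub_self hj, hw', hu', hexp]
  ring

lemma cauchyIntegral_kernel_integrand (hpos : ∀ x, 0 < lam x) (hR : ∀ x, lam x < R) (hr : 0 < r)
    (t : ℝ) (l₁ l₂ u₁ u₂ : ℕ) :
    (cauchyIntegral R fun w => cauchyIntegral r fun u => psiF lam u₁ w * pF lam u₂ u *
        Complex.exp (-(t : ℂ) * (w - u)) * w ^ (((l₁ + 1 : ℕ) : ℤ) - ((l₂ + 1 : ℕ) : ℤ)) *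
        u ^ (-((l₂ + 1 : ℕ) : ℤ)) * (∑ m ∈ range (l₂ + 1), w ^ m * u ^ (l₂ + 1 - 1 - m)))
      = ∑ j ∈ range (l₂ + 1), kerPhi lam r t ((l₂ : ℤ) - j) u₂ * cauchyIntegral R fun w =>
          psiF lam u₁ w * (w ^ ((l₁ : ℤ) - j) * Complex.exp (-(t : ℂ) * w)) := by
  have hR0 : 0 < R := (hpos 0).trans (hR 0)
  have hinner : ∀ w : ℂ, ‖w‖ = R → (cauchyIntegral r fun u => psiF lam u₁ w * pF lam u₂ u *
        Complex.exp (-(t : ℂ) * (w - u)) * w ^ (((l₁ + 1 : ℕ) : ℤ) - ((l₂ + 1 : ℕ) : ℤ)) *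
        u ^ (-((l₂ + 1 : ℕ) : ℤ)) * (∑ m ∈ range (l₂ + 1), w ^ m * u ^ (l₂ + 1 - 1 - m)))
      = ∑ j ∈ range (l₂ + 1), kerPhi lam r t ((l₂ : ℤ) - j) u₂ *
          (psiF lam u₁ w * (w ^ ((l₁ : ℤ) - j) * Complex.exp (-(t : ℂ) * w))) := fun w hw => by
    rw [cauchyIntegral_congr hr.le fun u hu => kernel_integrand_eq_sum _ _ t l₁ l₂
      (ne_zero_of_norm_eq hR0 hw) (ne_zero_of_norm_eq hr hu), cauchyIntegral_sum hr.le fun j _ =>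
      continuousOn_const.fun_mul ((continuous_pF lam u₂).continuousOn.fun_mul
        (continuousOn_exp_mul_zpow hr t _))]
    exact sum_congr rfl fun j _ => (cauchyIntegral_const_mul _ _ _).trans (mul_comm _ _)
  rw [cauchyIntegral_congr hR0.le hinner, cauchyIntegral_sum hR0.le fun j _ =>
    continuousOn_const.fun_mul ((continuousOn_psiF_sphere hpos hR u₁).fun_mul
      ((continuousOn_zpow_sphere hR0 _).fun_mul (by fun_prop)))]
  exact sum_congr rfl fun j _ => cauchyIntegral_const_mul _ _ _

lemma Kker_succ_succ_eq_sum_range (hpos : ∀ x, 0 < lam x) (hR : ∀ x, lam x < R) (hr : 0 < r)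
    (t : ℝ) (l₁ l₂ u₁ u₂ : ℕ) :
    Kker lam R r t (l₁ + 1) u₁ (l₂ + 1) u₂
      = (if l₁ < l₂ then kerTrans lam R (l₂ - l₁) u₁ u₂ else 0)
        + ∑ j ∈ range (l₂ + 1),
            kerPsi lam R t ((l₁ : ℤ) - j) u₁ * kerPhi lam r t ((l₂ : ℤ) - j) u₂ := by
  have htrans : (if l₁ + 1 < l₂ + 1 then 1 else 0) * (1 / (lam u₁ : ℂ)) *
      (cauchyIntegral R fun w =>
        psiF lam u₁ w * pF lam u₂ w * w ^ (((l₁ + 1 : ℕ) : ℤ) - ((l₂ + 1 : ℕ) : ℤ)))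
      = if l₁ < l₂ then kerTrans lam R (l₂ - l₁) u₁ u₂ else 0 := by
    simp only [add_lt_add_iff_right]
    split_ifs with h
    · rw [one_mul, kerTrans, pMoment, show (((l₁ + 1 : ℕ) : ℤ) - ((l₂ + 1 : ℕ) : ℤ))
        = -((l₂ - l₁ : ℕ) : ℤ) by lia]
      simp only [mul_left_comm (pF lam u₂ _), ← mul_assoc]
    · rw [zero_mul, zero_mul]
  unfold Kker
  simp only [← cauchyIntegral.eq_1]
  rw [htrans, cauchyIntegral_kernel_integrand hpos hR hr, sub_eq_add_neg, ← neg_mul, mul_sum]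
  simp only [kerPsi, psiMoment]
  exact congr_arg _ (sum_congr rfl fun j _ => by ring)

lemma Kker_succ_succ_eq_sum (hpos : ∀ x, 0 < lam x) (hR : ∀ x, lam x < R) (hr : 0 < r) (t : ℝ)
    {N l₁ l₂ : ℕ} (hl : l₂ ≤ N) (u₁ u₂ : ℕ) :
    Kker lam R r t (l₁ + 1) u₁ (l₂ + 1) u₂
      = (if l₁ < l₂ then kerTrans lam R (l₂ - l₁) u₁ u₂ else 0)
        + ∑ j : Fin (N + 1),
            kerPsi lam R t ((l₁ : ℤ) - j) u₁ * kerPhi lam r t ((l₂ : ℤ) - j) u₂ := by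
  rw [Kker_succ_succ_eq_sum_range hpos hR hr, Fin.sum_univ_eq_sum_range fun j : ℕ =>
    kerPsi lam R t ((l₁ : ℤ) - j) u₁ * kerPhi lam r t ((l₂ : ℤ) - j) u₂]
  refine congr_arg _ (sum_subset (range_mono (by lia)) fun j _ hj => ?_)
  rw [kerPhi_of_neg lam hr.le t (by rw [mem_range] at hj; lia), mul_zero]

end KernelFunctions

/-! ### The top level determinant -/

section TopLevel

variable {lam : ℕ → ℝ} {R : ℝ} {N : ℕ}

lemma det_one_submatrix_revPerm (A : Type*) [CommRing A] (n : ℕ) :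
    ((1 : Matrix (Fin n) (Fin n) A).submatrix Fin.revPerm id).det
      = ∏ i : Fin n, (-1) ^ (i : ℕ) := by
  induction n with
  | zero => simp
  | succ n ih =>
    have hminor : ((1 : Matrix (Fin (n + 1)) (Fin (n + 1)) A).submatrix Fin.revPerm id).submatrix
        Fin.succ (Fin.last n).succAbove
          = (1 : Matrix (Fin n) (Fin n) A).submatrix Fin.revPerm id := by
      ext i j
      simp [Matrix.one_apply, Fin.rev_succ]
    rw [Matrix.det_succ_row_zero, sum_eq_single (Fin.last n), Fin.prod_univ_castSucc, hminor, ih]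
    · rw [Matrix.submatrix_apply, Fin.revPerm_apply, Fin.rev_zero, id, Matrix.one_apply_eq]
      simp [mul_comm]
    · intro j _ hj
      simp [hj.symm]
    · simp

lemma sign_revPerm (A : Type*) [CommRing A] (n : ℕ) :
    ((Equiv.Perm.sign (Fin.revPerm : Equiv.Perm (Fin n)) : ℤ) : A)
      = ∏ i : Fin n, (-1) ^ (i : ℕ) := by
  rw [← det_one_submatrix_revPerm, Matrix.det_permute, Matrix.det_one, mul_one]

/-- `p_i` as a polynomial; the constant coefficient of each factor is written `λ(m) / λ(m)` so
that `eval_pPoly` also holds at a vanishing rate. -/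
noncomputable def pPoly (lam : ℕ → ℝ) (i : ℕ) : Polynomial ℂ :=
  ∏ m ∈ range i, (Polynomial.C ((lam m : ℂ) / lam m) - Polynomial.C (lam m : ℂ)⁻¹ * Polynomial.X)

lemma eval_pPoly (lam : ℕ → ℝ) (i : ℕ) (w : ℂ) : (pPoly lam i).eval w = pF lam i w := by
  simp only [pPoly, pF, Polynomial.eval_prod, Polynomial.eval_sub, Polynomial.eval_mul,
    Polynomial.eval_C, Polynomial.eval_X]
  exact prod_congr rfl fun m _ => by ring

lemma natDegree_pPoly_le (lam : ℕ → ℝ) (i : ℕ) : (pPoly lam i).natDegree ≤ i := by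
  refine (Polynomial.natDegree_prod_le _ _).trans
    ((sum_le_sum (g := fun _ => 1) fun m _ => ?_).trans (by simp))
  compute_degree

lemma coeff_pPoly_self (lam : ℕ → ℝ) (i : ℕ) :
    (pPoly lam i).coeff i = ∏ m ∈ range i, -(lam m : ℂ)⁻¹ := by
  have := Polynomial.coeff_prod_of_natDegree_le (s := range i)
    (fun m => Polynomial.C ((lam m : ℂ) / lam m) - Polynomial.C (lam m : ℂ)⁻¹ * Polynomial.X) 1
    (fun m _ => by compute_degree)
  simp only [card_range, mul_one] at this
  simp [pPoly, this, Polynomial.coeff_C]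

lemma eL_eq_psiMoment (lam : ℕ → ℝ) (R t : ℝ) (x y : ℕ) :
    eL lam R t x y = psiMoment lam R (fun w => pF lam x w * Complex.exp (-(t : ℂ) * w)) y := by
  simp only [eL, psiMoment, cauchyIntegral, mul_assoc]

lemma eL_eq_sum_coeff_mul_kerPsi (hpos : ∀ x, 0 < lam x) (hR : ∀ x, lam x < R) (t : ℝ) (y : ℕ)
    {i n : ℕ} (hi : i < n) :
    eL lam R t i y = ∑ k ∈ range n, (pPoly lam i).coeff k * kerPsi lam R t k y := by
  have hexpand : ∀ w, pF lam i w * Complex.exp (-(t : ℂ) * w)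
      = ∑ k ∈ range n, (pPoly lam i).coeff k * (w ^ (k : ℤ) * Complex.exp (-(t : ℂ) * w)) := by
    intro w
    rw [← eval_pPoly, Polynomial.eval_eq_sum_range' ((natDegree_pPoly_le lam i).trans_lt hi),
      sum_mul]
    exact sum_congr rfl fun k _ => by rw [zpow_natCast, mul_assoc]
  simp only [eL_eq_psiMoment, hexpand]
  exact psiMoment_sum hpos hR _ _ (fun k _ =>
    (continuousOn_zpow_sphere ((hpos 0).trans (hR 0)) _).mul (by fun_prop)) y

lemma hfun_one (lam : ℕ → ℝ) (x : Fin 1 → ℕ) : hfun lam 1 x = 1 := by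
  have : Unique { y : Fin 0 → ℕ // Interlace y x } :=
    ⟨⟨⟨Fin.elim0, fun i => i.elim0⟩⟩, fun _ => Subtype.ext (Subsingleton.elim _ _)⟩
  simp [hfun]

lemma interlace_val_iff {y : Fin N → ℕ} :
    Interlace y (fun i : Fin (N + 1) => (i : ℕ)) ↔ y = fun i : Fin N => (i : ℕ) := by
  simp only [Interlace, Fin.val_castSucc, Fin.val_succ, funext_iff]
  exact forall_congr' fun i => by lia

lemma hfun_val (lam : ℕ → ℝ) (N : ℕ) :
    hfun lam N (fun i : Fin N => (i : ℕ)) = ∏ m : Fin N, ∏ i ∈ range m, (lam i)⁻¹ := by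
  induction N with
  | zero => simp [hfun]
  | succ N ih =>
    rw [hfun, tsum_eq_single ⟨fun i : Fin N => (i : ℕ), interlace_val_iff.2 rfl⟩
      fun y hy => (hy (Subtype.ext (interlace_val_iff.1 y.2))).elim, ih, Fin.prod_univ_castSucc,
      mul_comm]
    congr 1
    exact Fin.prod_univ_eq_prod_range (fun i => (lam i)⁻¹) N

lemma det_coeff_pPoly (lam : ℕ → ℝ) (N : ℕ) :
    (Matrix.of fun i k : Fin N => (pPoly lam i).coeff k).det
      = (hfun lam N (fun i : Fin N => (i : ℕ)) : ℂ) * ∏ i : Fin N, (-1) ^ (i : ℕ) := by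
  have hlower : (Matrix.of fun i k : Fin N => (pPoly lam i).coeff k).IsLowerTriangular :=
    fun i _ hik =>
      Polynomial.coeff_eq_zero_of_natDegree_lt ((natDegree_pPoly_le lam i).trans_lt hik)
  rw [Matrix.det_of_isLowerTriangular _ hlower, hfun_val, Complex.ofReal_prod, ← prod_mul_distrib]
  refine prod_congr rfl fun i _ => ?_
  rw [Matrix.of_apply, coeff_pPoly_self, prod_neg, card_range, Complex.ofReal_prod, mul_comm]
  simp only [Complex.ofReal_inv]

lemma det_kerPsi_rev (lam : ℕ → ℝ) (R t : ℝ) (N : ℕ) (x : Fin (N + 1) → ℕ) :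
    (Matrix.of fun i j : Fin (N + 1) => kerPsi lam R t ((N : ℤ) - (i : ℕ)) (x j)).det
      = (∏ i : Fin (N + 1), (-1) ^ (i : ℕ)) *
        (Matrix.of fun i j : Fin (N + 1) => kerPsi lam R t (i : ℕ) (x j)).det := by
  rw [← sign_revPerm, ← Matrix.det_permute]
  congr 1
  ext i j
  simp only [Matrix.of_apply, Matrix.submatrix_apply, id, Fin.revPerm_apply, Fin.val_rev]
  congr 1
  have := i.is_lt
  lia

lemma det_eL_val (hpos : ∀ x, 0 < lam x) (hR : ∀ x, lam x < R) (t : ℝ) (N : ℕ)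
    (x : Fin (N + 1) → ℕ) :
    (Matrix.of fun i j : Fin (N + 1) => eL lam R t (i : ℕ) (x j)).det
      = (hfun lam (N + 1) (fun i : Fin (N + 1) => (i : ℕ)) : ℂ) *
        (Matrix.of fun i j : Fin (N + 1) => kerPsi lam R t ((N : ℤ) - (i : ℕ)) (x j)).det := by
  have hfactor : (Matrix.of fun i j : Fin (N + 1) => eL lam R t (i : ℕ) (x j))
      = (Matrix.of fun i k : Fin (N + 1) => (pPoly lam i).coeff k) *
        Matrix.of fun k j : Fin (N + 1) => kerPsi lam R t (k : ℕ) (x j) := by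
    ext i j
    rw [Matrix.mul_apply, Matrix.of_apply, eL_eq_sum_coeff_mul_kerPsi hpos hR t (x j) i.2]
    exact (Fin.sum_univ_eq_sum_range
      (fun k => (pPoly lam i).coeff k * kerPsi lam R t k (x j)) _).symm
  rw [hfactor, Matrix.det_mul, det_coeff_pPoly, det_kerPsi_rev, mul_assoc]

end TopLevel

section Density

variable {lam : ℕ → ℝ} {R : ℝ} {N : ℕ}

lemma strictMono_of_interlace {x : Fin (N + 1) → ℕ} {y : Fin N → ℕ} (h : Interlace y x) :
    StrictMono y := by
  cases N with
  | zero => exact fun i => i.elim0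
  | succ n =>
    refine Fin.strictMono_iff_lt_succ.2 fun i => (h i.castSucc).2.trans_le ?_
    simpa only [Fin.succ_castSucc] using (h i.succ).1

lemma finite_interlace (x : Fin (N + 1) → ℕ) : Finite { y : Fin N → ℕ // Interlace y x } :=
  ((Set.finite_Iic fun i : Fin N => x i.succ).subset fun _ hy i => (hy i).2.le).to_subtype

lemma hfun_pos (hpos : ∀ x, 0 < lam x) : ∀ {N : ℕ} {x : Fin N → ℕ},
    StrictMono x → 0 < hfun lam N x
  | 0, _, _ => by simp [hfun]
  | N + 1, x, hx => by
    have := finite_interlace x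
    have hterm : ∀ y : { y : Fin N → ℕ // Interlace y x },
        0 < (∏ i, (lam (y.1 i))⁻¹) * hfun lam N y.1 := fun y =>
      mul_pos (prod_pos fun i _ => inv_pos.2 (hpos _)) (hfun_pos hpos (strictMono_of_interlace y.2))
    rw [hfun]
    exact (Summable.of_finite).tsum_pos (fun y => (hterm y).le)
      ⟨fun i => x i.castSucc, fun i => ⟨le_rfl, hx Fin.castSucc_lt_succ⟩⟩ (hterm _)

lemma prod_fin_div_succ {K : Type*} [Field K] (f : Fin (N + 1) → K) (hf : ∀ n, f n ≠ 0) :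
    ∏ m : Fin N, f m.castSucc / f m.succ = f 0 / f (Fin.last N) := by
  have hprod := (Fin.prod_univ_succ f).symm.trans (Fin.prod_univ_castSucc f)
  rw [prod_div_distrib, div_eq_div_iff (prod_ne_zero_iff.2 fun m _ => hf _) (hf _), hprod]

lemma prod_frakL (hpos : ∀ x, 0 < lam x) {X : GTpat N} (hX : IsGT X) :
    ∏ m : Fin N, frakL lam ((m : ℕ) + 1) (X m.succ) (X m.castSucc)
      = (∏ m : Fin N, ∏ i, (lam (X m.castSucc i))⁻¹) / hfun lam (N + 1) (X (Fin.last N)) := by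
  have htel := prod_fin_div_succ (fun n : Fin (N + 1) => hfun lam ((n : ℕ) + 1) (X n))
    fun n => (hfun_pos hpos (hX.1 n)).ne'
  have hone : hfun lam (((0 : Fin (N + 1)) : ℕ) + 1) (X 0) = 1 := hfun_one lam (X 0)
  rw [hone] at htel
  rw [div_eq_mul_one_div]
  refine Eq.trans ?_ (congrArg _ htel)
  rw [← prod_mul_distrib]
  refine prod_congr rfl fun m _ => ?_
  rw [frakL, if_pos (hX.2 m), mul_one, mul_comm]
  rfl

lemma dens_eq (hpos : ∀ x, 0 < lam x) (hR : ∀ x, lam x < R) (t : ℝ) {X : GTpat N} (hX : IsGT X) :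
    dens lam R t N X
      = (Matrix.of fun i j : Fin (N + 1) => kerPsi lam R t ((N : ℤ) - (i : ℕ))
          (X (Fin.last N) j)).det *
        ∏ m : Fin N, ∏ i, (lam (X m.castSucc i) : ℂ)⁻¹ := by
  have hbot : (hfun lam (N + 1) (fun i : Fin (N + 1) => (i : ℕ)) : ℂ) ≠ 0 :=
    Complex.ofReal_ne_zero.2 (hfun_pos hpos fun _ _ h => h).ne'
  have htop : (hfun lam (N + 1) (X (Fin.last N)) : ℂ) ≠ 0 :=
    Complex.ofReal_ne_zero.2 (hfun_pos hpos (hX.1 (Fin.last N))).ne'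
  unfold _root_.dens frakP
  rw [det_eL_val hpos hR, prod_frakL hpos hX]
  push_cast
  field_simp

end Density

/-! ### Nonnegativity of the density -/

section ParametricIntegral

lemma hasDerivAt_intervalIntegral_of_continuous {F F' : ℝ → ℝ → ℂ} (hF : ∀ t, Continuous (F t))
    (hF' : Continuous (Function.uncurry F')) (h : ∀ t θ, HasDerivAt (fun t => F t θ) (F' t θ) t)
    (a b t₀ : ℝ) : HasDerivAt (fun t => ∫ θ in a..b, F t θ) (∫ θ in a..b, F' t₀ θ) t₀ := by
  obtain ⟨C, hC⟩ := ((isCompact_closedBall t₀ 1).prod isCompact_uIcc).exists_bound_of_continuousOn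
    (f := Function.uncurry F') (s := Metric.closedBall t₀ 1 ×ˢ Set.uIcc a b) hF'.continuousOn
  refine (intervalIntegral.hasDerivAt_integral_of_dominated_loc_of_deriv_le (bound := fun _ => C)
    (Metric.ball_mem_nhds t₀ one_pos) (.of_forall fun t => (hF t).aestronglyMeasurable)
    ((hF t₀).intervalIntegrable _ _) (hF'.uncurry_left t₀).aestronglyMeasurable
    (.of_forall fun θ hθ t ht => ?_) intervalIntegrable_const
    (.of_forall fun θ _ t _ => h t θ)).2
  exact hC (t, θ) ⟨Metric.ball_subset_closedBall ht, Set.uIoc_subset_uIcc hθ⟩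

lemma hasDerivAt_cauchyIntegral_mul_exp {ρ : ℝ} (hρ : 0 ≤ ρ) {q : ℂ → ℂ}
    (hq : ContinuousOn q (Metric.sphere 0 ρ)) (t₀ : ℝ) :
    HasDerivAt (fun t : ℝ => cauchyIntegral ρ fun w => q w * Complex.exp (-(t : ℂ) * w))
      (cauchyIntegral ρ fun w => -w * (q w * Complex.exp (-(t₀ : ℂ) * w))) t₀ := by
  have hqc : Continuous fun θ : ℝ => q (circleMap 0 ρ θ) :=
    hq.comp_continuous (continuous_circleMap 0 ρ) (circleMap_mem_sphere 0 hρ)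
  have hc := continuous_circleMap 0 ρ
  simp only [cauchyIntegral, circleIntegral, deriv_circleMap, smul_eq_mul]
  refine .const_mul _ (hasDerivAt_intervalIntegral_of_continuous
    (F := fun t θ => circleMap 0 ρ θ * Complex.I *
      (q (circleMap 0 ρ θ) * Complex.exp (-(t : ℂ) * circleMap 0 ρ θ)))
    (F' := fun t θ => circleMap 0 ρ θ * Complex.I *
      (-circleMap 0 ρ θ * (q (circleMap 0 ρ θ) * Complex.exp (-(t : ℂ) * circleMap 0 ρ θ))))
    (fun t => (hc.mul continuous_const).mul (hqc.mul (by fun_prop)))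
    (((hc.comp continuous_snd).mul continuous_const).mul ((hc.comp continuous_snd).neg.mul
      ((hqc.comp continuous_snd).mul (by fun_prop)))) (fun t θ => ?_) _ _ t₀)
  have hexp : HasDerivAt (fun z : ℂ => Complex.exp (-z * circleMap 0 ρ θ))
      (Complex.exp (-(t : ℂ) * circleMap 0 ρ θ) * (-1 * circleMap 0 ρ θ)) (t : ℂ) :=
    ((hasDerivAt_id (t : ℂ)).neg.mul_const _).cexp
  exact ((hexp.comp_ofReal.const_mul _).const_mul _).congr_deriv (by ring)

end ParametricIntegral

section ForwardEquation

variable {lam : ℕ → ℝ} {R : ℝ}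

/-- The rate at which the walk jumps into `y` from below, with no such jump into `0`. -/
def inRate (lam : ℕ → ℝ) : ℕ → ℝ
  | 0 => 0
  | y + 1 => lam y

lemma inRate_mul_eL (hpos : ∀ x, 0 < lam x) (hR : ∀ x, lam x < R) (t : ℝ) (x y : ℕ) :
    (inRate lam y : ℂ) * eL lam R t x (y - 1) = -cauchyIntegral R
      fun w => (pF lam y w)⁻¹ * pF lam x w * Complex.exp (-(t : ℂ) * w) := by
  cases y with
  | zero =>
    simp only [inRate, Complex.ofReal_zero, zero_mul, pF_zero, inv_one, one_mul]
    rw [cauchyIntegral_eq_zero_of_differentiable ((hpos 0).trans (hR 0)).le (by fun_prop), neg_zero]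
  | succ y =>
    have := ofReal_rate_ne_zero hpos y
    simp only [inRate, Nat.add_sub_cancel, eL, ← psiF_eq_inv_pF_succ, cauchyIntegral]
    field_simp

lemma neg_mul_psiF (hpos : ∀ x, 0 < lam x) {w : ℂ} (hw : ∀ x, lam x < ‖w‖) (y : ℕ) :
    -w * psiF lam y w = lam y * (pF lam y w)⁻¹ - lam y * psiF lam y w := by
  have := ofReal_sub_ne_zero_of_lt_norm (hpos y) (hw y)
  rw [psiF_eq_inv_pF_succ, pF_succ, mul_inv, inv_div]
  field_simp
  ring

lemma hasDerivAt_eL (hpos : ∀ x, 0 < lam x) (hR : ∀ x, lam x < R) (t : ℝ) (x y : ℕ) :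
    HasDerivAt (fun t => eL lam R t x y)
      (-(lam y : ℂ) * eL lam R t x y + inRate lam y * eL lam R t x (y - 1)) t := by
  have hR0 := ((hpos 0).trans (hR 0)).le
  have hy := ofReal_rate_ne_zero hpos y
  have hψ := continuousOn_psiF_sphere hpos hR y
  have hpinv : ContinuousOn (fun w => (pF lam y w)⁻¹) (Metric.sphere 0 R) :=
    (continuous_pF lam y).continuousOn.inv₀ fun w hw =>
      pF_ne_zero hpos (mem_sphere_zero_iff_norm.1 hw ▸ hR) y
  have hderiv := (hasDerivAt_cauchyIntegral_mul_exp hR0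
    (hψ.fun_mul (continuous_pF lam x).continuousOn) t).const_mul (-(1 / (lam y : ℂ)))
  refine hderiv.congr_deriv ?_
  have hsplit : ∀ w, ‖w‖ = R →
      -w * (psiF lam y w * pF lam x w * Complex.exp (-(t : ℂ) * w))
        = lam y * ((pF lam y w)⁻¹ * pF lam x w * Complex.exp (-(t : ℂ) * w))
          - lam y * (psiF lam y w * pF lam x w * Complex.exp (-(t : ℂ) * w)) := fun w hw => by
    linear_combination
      (pF lam x w * Complex.exp (-(t : ℂ) * w)) * neg_mul_psiF hpos (hw ▸ hR) y
  rw [cauchyIntegral_congr hR0 hsplit, cauchyIntegral_sub hR0 (by fun_prop) (by fun_prop),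
    cauchyIntegral_const_mul, cauchyIntegral_const_mul, inRate_mul_eL hpos hR, eL]
  simp only [cauchyIntegral]
  field_simp
  ring

lemma eL_zero (hpos : ∀ x, 0 < lam x) (hR : ∀ x, lam x < R) (x y : ℕ) :
    eL lam R 0 x y = if x = y then 1 else 0 := by
  have hy := ofReal_rate_ne_zero hpos y
  simp only [eL_eq_psiMoment, psiMoment, Complex.ofReal_zero, neg_zero, zero_mul, Complex.exp_zero,
    mul_one, cauchyIntegral_psiF_mul_pF hpos hR]
  split_ifs
  · field_simp
  · rw [mul_zero]

lemma hasDerivAt_det {n : Type*} [Fintype n] [DecidableEq n] {A : ℝ → Matrix n n ℂ}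
    {A' : Matrix n n ℂ} {t : ℝ} (h : ∀ i j, HasDerivAt (fun t => A t i j) (A' i j) t) :
    HasDerivAt (fun t => (A t).det) (∑ j, ((A t).updateCol j fun i => A' i j).det) t := by
  simp only [Matrix.det_apply']
  rw [sum_comm]
  refine HasDerivAt.fun_sum fun σ _ => ?_
  rw [← mul_sum]
  refine HasDerivAt.const_mul _ ?_
  convert HasDerivAt.fun_finsetProd (u := univ) fun i _ => h (σ i) i using 1
  refine sum_congr rfl fun j _ => ?_
  rw [← prod_erase_mul _ _ (mem_univ j), smul_eq_mul, Matrix.updateCol_self]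
  exact congrArg (· * _) (prod_congr rfl fun i hi => Matrix.updateCol_ne (ne_of_mem_erase hi))

lemma hasDerivAt_det_eL (hpos : ∀ x, 0 < lam x) (hR : ∀ x, lam x < R) (t : ℝ) {n : ℕ}
    (x y : Fin n → ℕ) :
    HasDerivAt (fun t => (Matrix.of fun i j : Fin n => eL lam R t (x i) (y j)).det)
      (-((∑ j, lam (y j) : ℝ) : ℂ) * (Matrix.of fun i j : Fin n => eL lam R t (x i) (y j)).det
        + ∑ j, inRate lam (y j) * (Matrix.of fun i k : Fin n =>
            eL lam R t (x i) (Function.update y j (y j - 1) k)).det) t := by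
  set A := Matrix.of fun i j : Fin n => eL lam R t (x i) (y j)
  refine (hasDerivAt_det (fun i j => hasDerivAt_eL hpos hR t (x i) (y j)) :
    HasDerivAt (fun t => (Matrix.of fun i j => eL lam R t (x i) (y j)).det) _ t).congr_deriv ?_
  rw [Complex.ofReal_sum, ← sum_neg_distrib, sum_mul, ← sum_add_distrib]
  refine sum_congr rfl fun j _ => ?_
  have hcol : (fun i => -(lam (y j) : ℂ) * eL lam R t (x i) (y j)
        + inRate lam (y j) * eL lam R t (x i) (y j - 1))
      = (-(lam (y j) : ℂ)) • (fun i => A i j)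
        + (inRate lam (y j) : ℂ) • fun i => eL lam R t (x i) (y j - 1) := rfl
  rw [hcol, Matrix.det_updateCol_add, Matrix.det_updateCol_smul, Matrix.det_updateCol_smul,
    Matrix.updateCol_eq_self]
  congr 3
  ext i k
  rcases eq_or_ne k j with rfl | hk
  · simp
  · simp [hk]

end ForwardEquation

section Nonnegativity

variable {lam : ℕ → ℝ} {R : ℝ} {n : ℕ}

lemma nonneg_of_hasDerivAt_nonneg {G G' : ℝ → ℂ} (h : ∀ t, HasDerivAt G (G' t) t)
    (hG' : ∀ t, 0 ≤ t → 0 ≤ G' t) (h0 : 0 ≤ G 0) {t : ℝ} (ht : 0 ≤ t) : 0 ≤ G t := by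
  have hmono : ∀ L : ℂ →L[ℝ] ℝ, (∀ z : ℂ, 0 ≤ z → 0 ≤ L z) → 0 ≤ L (G t) := fun L hL => by
    have hd : ∀ t, HasDerivAt (fun t => L (G t)) (L (G' t)) t := fun t =>
      L.hasFDerivAt.comp_hasDerivAt t (h t)
    refine (hL _ h0).trans (monotoneOn_of_deriv_nonneg (convex_Ici (0 : ℝ))
      (fun t _ => (hd t).continuousAt.continuousWithinAt)
      (fun t _ => (hd t).differentiableAt.differentiableWithinAt) (fun t ht' => ?_)
      Set.self_mem_Ici ht ht)
    exact (hd t).deriv ▸ hL _ (hG' t (interior_subset ht'))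
  refine Complex.nonneg_iff.2 ⟨hmono Complex.reCLM fun z hz => (Complex.nonneg_iff.1 hz).1,
    le_antisymm (hmono Complex.imCLM fun z hz => (Complex.nonneg_iff.1 hz).2.le) ?_⟩
  simpa using hmono (-Complex.imCLM) fun z hz => by simp [← (Complex.nonneg_iff.1 hz).2]

lemma nonneg_of_hasDerivAt_neg_mul_add {F G : ℝ → ℂ} {c : ℝ}
    (h : ∀ t, HasDerivAt F (-(c : ℂ) * F t + G t) t) (hG : ∀ t, 0 ≤ t → 0 ≤ G t) (h0 : 0 ≤ F 0)
    {t : ℝ} (ht : 0 ≤ t) : 0 ≤ F t := by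
  have hexp_nonneg : ∀ s : ℝ, (0 : ℂ) ≤ (Real.exp s : ℂ) := fun s =>
    Complex.zero_le_real.2 (Real.exp_pos s).le
  have hd : ∀ t : ℝ, HasDerivAt (fun t : ℝ => (Real.exp (c * t) : ℂ) * F t)
      ((Real.exp (c * t) : ℂ) * G t) t := fun t => by
    have hexp : HasDerivAt (fun t : ℝ => Real.exp (c * t)) (Real.exp (c * t) * (c * 1)) t :=
      ((hasDerivAt_id t).const_mul c).exp
    refine (hexp.ofReal_comp.mul (h t)).congr_deriv ?_
    push_cast
    ring
  have hnonneg := nonneg_of_hasDerivAt_nonneg hd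
    (fun t ht => mul_nonneg (hexp_nonneg _) (hG t ht)) (by simpa using h0) ht
  have hinv : F t = (Real.exp (-(c * t)) : ℂ) * ((Real.exp (c * t) : ℂ) * F t) := by
    rw [← mul_assoc, ← Complex.ofReal_mul, ← Real.exp_add]
    simp
  exact hinv ▸ mul_nonneg (hexp_nonneg _) hnonneg

lemma det_eL_zero_nonneg (hpos : ∀ x, 0 < lam x) (hR : ∀ x, lam x < R) {x y : Fin n → ℕ}
    (hx : StrictMono x) (hy : StrictMono y) :
    0 ≤ (Matrix.of fun i j : Fin n => eL lam R 0 (x i) (y j)).det := by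
  simp only [eL_zero hpos hR]
  by_cases hsub : Set.range y ⊆ Set.range x
  · have hcard : (Set.range x).ncard ≤ (Set.range y).ncard := by
      rw [Set.ncard_range_of_injective hx.injective, Set.ncard_range_of_injective hy.injective]
    obtain rfl : y = x := (hy.range_inj hx).1
      (Set.eq_of_subset_of_ncard_le hsub hcard (Set.finite_range x))
    have hone : (Matrix.of fun i j : Fin n => if y i = y j then (1 : ℂ) else 0) = 1 := by
      ext i j
      simp only [Matrix.of_apply, Matrix.one_apply, hy.injective.eq_iff]
    rw [hone, Matrix.det_one]
    exact zero_le_one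
  · obtain ⟨_, ⟨j, rfl⟩, hj⟩ := Set.not_subset.1 hsub
    exact (Matrix.det_eq_zero_of_column_eq_zero j fun i => if_neg fun hij => hj ⟨i, hij⟩).ge

lemma update_pred_le (y : Fin n → ℕ) (j : Fin n) : Function.update y j (y j - 1) ≤ y :=
  update_le_self_iff.2 (Nat.sub_le _ _)

lemma monotone_update_pred {y : Fin n → ℕ} (hy : StrictMono y) (j : Fin n) :
    Monotone (Function.update y j (y j - 1)) := by
  intro a b hab
  rcases hab.eq_or_lt with rfl | hab
  · rfl
  have hle := update_pred_le y j a
  have hlt := hy hab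
  rcases eq_or_ne b j with rfl | hb
  · rw [Function.update_self]
    lia
  · rw [Function.update_of_ne hb]
    lia

lemma sum_update_pred_lt {y : Fin n → ℕ} {j : Fin n} (hj : y j ≠ 0) :
    ∑ k, Function.update y j (y j - 1) k < ∑ k, y k :=
  sum_lt_sum (fun k _ => update_pred_le y j k) ⟨j, mem_univ j, by rw [Function.update_self]; lia⟩

/-- In the forward equation, decreasing one coordinate of `y` either keeps it in the Weyl chamber or
makes two columns of the determinant equal. -/
lemma det_eL_nonneg (hpos : ∀ x, 0 < lam x) (hR : ∀ x, lam x < R) {x y : Fin n → ℕ}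
    (hx : StrictMono x) (hy : StrictMono y) {t : ℝ} (ht : 0 ≤ t) :
    0 ≤ (Matrix.of fun i j : Fin n => eL lam R t (x i) (y j)).det := by
  induction hS : ∑ j, y j using Nat.strong_induction_on generalizing y t with
  | _ S ih =>
    refine nonneg_of_hasDerivAt_neg_mul_add (fun t => hasDerivAt_det_eL hpos hR t x y)
      (fun t ht => sum_nonneg fun j _ => ?_) (det_eL_zero_nonneg hpos hR hx hy) ht
    rcases eq_or_ne (y j) 0 with h0 | h0
    · rw [h0, inRate, Complex.ofReal_zero, zero_mul]
    obtain ⟨m, hm⟩ := Nat.exists_eq_succ_of_ne_zero h0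
    refine mul_nonneg (hm ▸ Complex.zero_le_real.2 (hpos m).le) ?_
    by_cases hinj : Function.Injective (Function.update y j (y j - 1))
    · exact ih _ (hS ▸ sum_update_pred_lt h0)
        ((monotone_update_pred hy j).strictMono_of_injective hinj) ht rfl
    · obtain ⟨a, b, hab, hne⟩ := Function.not_injective_iff.1 hinj
      exact (Matrix.det_zero_of_column_eq hne fun i => congrArg (eL lam R t (x i)) hab).ge

lemma det_kerPsi_nonneg (hpos : ∀ x, 0 < lam x) (hR : ∀ x, lam x < R) {t : ℝ} (ht : 0 ≤ t)
    {x : Fin (n + 1) → ℕ} (hx : StrictMono x) :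
    0 ≤ (Matrix.of fun i j : Fin (n + 1) => kerPsi lam R t ((n : ℤ) - (i : ℕ)) (x j)).det := by
  have hdet := det_eL_nonneg hpos hR (x := fun i : Fin (n + 1) => (i : ℕ)) (fun _ _ h => h) hx ht
  rw [det_eL_val hpos hR] at hdet
  exact le_of_mul_le_mul_left (by rwa [mul_zero])
    (Complex.zero_lt_real.2 (hfun_pos hpos fun _ _ h => h))

lemma dens_nonneg (hpos : ∀ x, 0 < lam x) (hR : ∀ x, lam x < R) {t : ℝ} (ht : 0 ≤ t)
    {X : GTpat n} (hX : IsGT X) : 0 ≤ dens lam R t n X := by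
  rw [dens_eq hpos hR t hX]
  refine mul_nonneg (det_kerPsi_nonneg hpos hR ht (hX.1 (Fin.last n)))
    (prod_nonneg fun m _ => prod_nonneg fun i _ => ?_)
  exact inv_nonneg.2 (Complex.zero_le_real.2 (hpos _).le)

end Nonnegativity

/-! ### Sums over Gelfand–Tsetlin patterns with a given top level -/

section LevelSums

variable {A : Type*} [CommRing A]

/-- Iterated weighted partial sums: the function at level `l` and index `i` starts at `κ (l - i)`
and decreases by the values, weighted by `w`, of the function at level `l - 1`. -/
def levelFun (κ : ℤ → A) (w : ℕ → ℕ → A) : ℕ → ℕ → ℕ → A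
  | 0, i, _ => κ (0 - (i : ℤ))
  | l + 1, i, u => κ ((l + 1 : ℕ) - (i : ℤ)) - ∑ y ∈ range u, levelFun κ w l i y * w l y

lemma levelFun_of_lt {κ : ℤ → A} (hκ : ∀ m < 0, κ m = 0) (w : ℕ → ℕ → A) {l i : ℕ} (h : l < i)
    (u : ℕ) : levelFun κ w l i u = 0 := by
  induction l generalizing u with
  | zero => exact hκ _ (by lia)
  | succ l ih =>
    rw [levelFun, hκ _ (by lia), sum_eq_zero fun y _ => by rw [ih (by lia), zero_mul], sub_zero]

lemma levelFun_self {κ : ℤ → A} (hκ : ∀ m < 0, κ m = 0) (hκ0 : κ 0 = 1) (w : ℕ → ℕ → A) (l u : ℕ) :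
    levelFun κ w l l u = 1 := by
  cases l with
  | zero => simp [levelFun, hκ0]
  | succ l =>
    rw [levelFun, sum_eq_zero fun y _ => by rw [levelFun_of_lt hκ w l.lt_succ_self, zero_mul],
      sub_self, hκ0, sub_zero]

lemma sum_piFinset_det {n : Type*} [Fintype n] [DecidableEq n] {α : Type*} (F : n → α → A)
    (S : n → Finset α) :
    ∑ y ∈ Fintype.piFinset S, (Matrix.of fun i j => F i (y j)).det
      = (Matrix.of fun i j => ∑ u ∈ S j, F i u).det := by
  have hsum := (Matrix.detRowAlternating (n := n) (R := A)).toMultilinearMap.map_sum_finset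
    (fun _ u => fun i => F i u) S
  have hcol : (Matrix.of fun i j => ∑ u ∈ S j, F i u).transpose
      = fun j => ∑ u ∈ S j, fun i => F i u := by
    ext j i
    simp
  rw [← Matrix.det_transpose, hcol]
  exact (sum_congr rfl fun y _ => (Matrix.det_transpose _).symm).trans hsum.symm

lemma det_eq_det_sub_of_last_row_eq_one {n : ℕ} {M : Matrix (Fin (n + 1)) (Fin (n + 1)) A}
    (hM : ∀ j, M (Fin.last n) j = 1) :
    M.det = (Matrix.of fun i j : Fin n => M i.castSucc j.castSucc - M i.castSucc j.succ).det := by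
  set B : Matrix (Fin (n + 1)) (Fin (n + 1)) A := Matrix.of fun i j =>
    Fin.cases (motive := fun _ => A) (M i 0) (fun j => M i j.succ - M i j.castSucc) j with hB
  have hdet : M.det = B.det :=
    Matrix.det_eq_of_forall_col_eq_smul_add_pred (fun _ => 1) (fun i => rfl) fun i j => by simp [hB]
  have hsub : B.submatrix (Fin.last n).succAbove (Fin.succAbove 0)
      = -(Matrix.of fun i j : Fin n => M i.castSucc j.castSucc - M i.castSucc j.succ) := by
    ext i j
    simp [hB]
  rw [hdet, Matrix.det_succ_row B (Fin.last n), Fin.sum_univ_succ,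
    sum_eq_zero fun j _ => by simp [hB, hM], hsub, Matrix.det_neg, Fintype.card_fin]
  simp [hB, hM, ← mul_assoc, ← mul_pow]

lemma det_levelFun_succ {κ : ℤ → A} (hκ : ∀ m < 0, κ m = 0) (hκ0 : κ 0 = 1) (w : ℕ → ℕ → A)
    (l : ℕ) {x : Fin (l + 2) → ℕ} (hx : Monotone x) :
    (Matrix.of fun i j : Fin (l + 2) => levelFun κ w (l + 1) i (x j)).det
      = ∑ y ∈ Fintype.piFinset fun j : Fin (l + 1) => Ico (x j.castSucc) (x j.succ),
          (∏ j, w l (y j)) * (Matrix.of fun i j : Fin (l + 1) => levelFun κ w l i (y j)).det := by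
  have hrow : ∀ y : Fin (l + 1) → ℕ,
      (∏ j, w l (y j)) * (Matrix.of fun i j : Fin (l + 1) => levelFun κ w l i (y j)).det
        = (Matrix.of fun i j : Fin (l + 1) => levelFun κ w l i (y j) * w l (y j)).det := fun y => by
    rw [← Matrix.det_mul_row]
    simp only [Matrix.of_apply, mul_comm (w l _)]
  rw [det_eq_det_sub_of_last_row_eq_one fun j => levelFun_self hκ hκ0 w (l + 1) (x j),
    sum_congr rfl fun y _ => hrow y,
    sum_piFinset_det fun (i : Fin (l + 1)) u => levelFun κ w l i u * w l u]
  congr 1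
  ext i j
  simp only [Matrix.of_apply, Fin.val_castSucc, levelFun]
  rw [sub_sub_sub_cancel_left, sum_Ico_eq_sub _ (hx Fin.castSucc_lt_succ.le)]

/-- Adding a top level to a Gelfand–Tsetlin pattern. -/
def snocGT (l : ℕ) : (Fin (l + 2) → ℕ) × GTpat l ≃ GTpat (l + 1) :=
  Fin.snocEquiv fun n : Fin (l + 2) => Fin ((n : ℕ) + 1) → ℕ

lemma snocGT_last (l : ℕ) (p : (Fin (l + 2) → ℕ) × GTpat l) :
    snocGT l p (Fin.last (l + 1)) = p.1 :=
  Fin.snoc_last (α := fun n : Fin (l + 2) => Fin ((n : ℕ) + 1) → ℕ) p.1 p.2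

lemma snocGT_castSucc (l : ℕ) (p : (Fin (l + 2) → ℕ) × GTpat l) (m : Fin (l + 1)) :
    snocGT l p m.castSucc = p.2 m :=
  Fin.snoc_castSucc (α := fun n : Fin (l + 2) => Fin ((n : ℕ) + 1) → ℕ) p.1 p.2 m

lemma isGT_snocGT_iff (l : ℕ) (p : (Fin (l + 2) → ℕ) × GTpat l) :
    IsGT (snocGT l p) ↔ StrictMono p.1 ∧ IsGT p.2 ∧ Interlace (p.2 (Fin.last l)) p.1 := by
  have hmono : (∀ n, StrictMono (snocGT l p n)) ↔ (∀ n, StrictMono (p.2 n)) ∧ StrictMono p.1 := by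
    rw [Fin.forall_fin_succ', snocGT_last]
    exact and_congr_left fun _ => forall_congr' fun m => by rw [snocGT_castSucc]
  have hinterlace : (∀ m : Fin (l + 1), Interlace (snocGT l p m.castSucc) (snocGT l p m.succ))
      ↔ (∀ m : Fin l, Interlace (p.2 m.castSucc) (p.2 m.succ))
        ∧ Interlace (p.2 (Fin.last l)) p.1 := by
    rw [Fin.forall_fin_succ']
    refine and_congr (forall_congr' fun m => ?_) ?_
    · rw [snocGT_castSucc]
      exact iff_of_eq (congrArg (Interlace (p.2 m.castSucc)) (snocGT_castSucc l p m.succ))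
    · rw [snocGT_castSucc]
      exact iff_of_eq (congrArg (Interlace (p.2 (Fin.last l))) (snocGT_last l p))
  rw [IsGT, hmono, hinterlace, IsGT]
  tauto

/-- The Gelfand–Tsetlin patterns whose top level is `x`. -/
abbrev GTWithTop {l : ℕ} (x : Fin (l + 1) → ℕ) : Type :=
  {X : GTpat l // IsGT X ∧ X (Fin.last l) = x}

/-- A pattern with top level `x` amounts to a second level interlacing with `x` and a pattern below
it. -/
noncomputable def sigmaInterlaceEquiv {l : ℕ} {x : Fin (l + 2) → ℕ} (hx : StrictMono x) :
    (Σ y : {y : Fin (l + 1) → ℕ // Interlace y x}, GTWithTop y.1) ≃ GTWithTop x :=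
  Equiv.ofBijective
    (fun p => ⟨snocGT l (x, p.2.1), (isGT_snocGT_iff l _).2
      ⟨hx, p.2.2.1, (congrArg (Interlace · x) p.2.2.2).mpr p.1.2⟩, snocGT_last l _⟩) <| by
    constructor
    · rintro ⟨⟨y, hy⟩, X, hX, hXy⟩ ⟨⟨y', hy'⟩, X', hX', hXy'⟩ h
      obtain rfl : X = X' := (Prod.mk.inj ((snocGT l).injective (Subtype.mk.inj h))).2
      obtain rfl : y = y' := hXy.symm.trans hXy'
      rfl
    · rintro ⟨Y, hY, rfl⟩
      obtain ⟨⟨x, X⟩, rfl⟩ := (snocGT l).surjective Y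
      have hXY := (isGT_snocGT_iff l _).1 hY
      have hx := snocGT_last l (x, X)
      exact ⟨⟨⟨_, hx.symm ▸ hXY.2.2⟩, X, hXY.2.1, rfl⟩,
        Subtype.ext (congrArg (fun x => snocGT l (x, X)) hx)⟩

lemma isGT_zero (X : GTpat 0) : IsGT X :=
  ⟨Fin.forall_fin_one.2 (Subsingleton.strictMono (α := Fin 1) (X 0)), fun m => m.elim0⟩

instance {x : Fin (0 + 1) → ℕ} : Unique (GTWithTop x) where
  default := ⟨Fin.cases x fun i => i.elim0, isGT_zero _, rfl⟩
  uniq := by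
    rintro ⟨X, hX, rfl⟩
    exact Subtype.ext (funext (Fin.forall_fin_one.2 rfl))

lemma finite_GTWithTop {l : ℕ} {x : Fin (l + 1) → ℕ} (hx : StrictMono x) :
    Finite (GTWithTop x) := by
  induction l with
  | zero => infer_instance
  | succ l ih =>
    have := finite_interlace x
    have (y : {y : Fin (l + 1) → ℕ // Interlace y x}) : Finite (GTWithTop y.1) :=
      ih (strictMono_of_interlace y.2)
    exact Finite.of_equiv _ (sigmaInterlaceEquiv hx)

/-- The product of the weights of all entries below the top level. -/
def levelWeight (w : ℕ → ℕ → A) {l : ℕ} (X : GTpat l) : A :=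
  ∏ m : Fin l, ∏ j, w m (X m.castSucc j)

lemma levelWeight_snocGT (w : ℕ → ℕ → A) (l : ℕ) (p : (Fin (l + 2) → ℕ) × GTpat l) :
    levelWeight w (snocGT l p) = levelWeight w p.2 * ∏ j, w l (p.2 (Fin.last l) j) := by
  rw [levelWeight, Fin.prod_univ_castSucc, levelWeight]
  refine congrArg₂ _ (prod_congr rfl fun m _ => ?_) ?_
  · exact congrArg (fun y : Fin ((m : ℕ) + 1) → ℕ => ∏ j, w m (y j))
      (snocGT_castSucc l p m.castSucc)
  · exact congrArg (fun y : Fin (l + 1) → ℕ => ∏ j, w l (y j)) (snocGT_castSucc l p (Fin.last l))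

lemma sum_levelWeight {κ : ℤ → A} (hκ : ∀ m < 0, κ m = 0) (hκ0 : κ 0 = 1) (w : ℕ → ℕ → A)
    {l : ℕ} {x : Fin (l + 1) → ℕ} (hx : StrictMono x) [Fintype (GTWithTop x)] :
    ∑ X : GTWithTop x, levelWeight w X.1
      = (Matrix.of fun i j : Fin (l + 1) => levelFun κ w l i (x j)).det := by
  induction l with
  | zero =>
    have hdet : (Matrix.of fun i j : Fin 1 => levelFun κ w 0 i (x j)).det = 1 :=
      (Matrix.det_fin_one _).trans (levelFun_self hκ hκ0 w 0 (x 0))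
    rw [Fintype.sum_unique, levelWeight, Fin.prod_univ_zero]
    exact hdet.symm
  | succ l ih =>
    cases @nonempty_fintype _ (finite_interlace x)
    have hfin (y : {y // Interlace y x}) : Fintype (GTWithTop y.1) :=
      @Fintype.ofFinite _ (finite_GTWithTop (strictMono_of_interlace y.2))
    rw [det_levelFun_succ hκ hκ0 w l hx.monotone, sum_subtype (p := fun y => Interlace y x) _
      fun y => by simp [Interlace], ← (sigmaInterlaceEquiv hx).sum_comp, Fintype.sum_sigma]
    refine sum_congr rfl fun y _ => ?_
    rw [← ih (strictMono_of_interlace y.2), mul_sum]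
    refine sum_congr rfl fun X _ => (levelWeight_snocGT w l (x, X.1)).trans ?_
    exact (mul_comm _ _).trans
      (congrArg (fun y : Fin (l + 1) → ℕ => (∏ j, w l (y j)) * levelWeight w X.1) X.2.2)

end LevelSums

/-! ### Level functions perturbed at finitely many sites -/

section PerturbedLevels

variable {ι : Type*} [Fintype ι] {N : ℕ}

/-- The total mass that `a` places on the position `u` at level `l`, when the `c`-th mass sits at
the site `z c = (level, position)`. -/
noncomputable def levelMass (z : ι → Fin (N + 1) × ℕ) (a : ι → ℂ) (l u : ℕ) : ℂ :=
  ∑ c, if ((z c).1 : ℕ) = l ∧ (z c).2 = u then a c else 0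

/-- The functions `levelFun` for the weights `1 / lam u` perturbed by the masses `a` at the sites
`z`. -/
noncomputable def pertPhi (lam : ℕ → ℝ) (r t : ℝ) (z : ι → Fin (N + 1) × ℕ) (a : ι → ℂ) :
    ℕ → ℕ → ℕ → ℂ :=
  levelFun (fun m => kerPhi lam r t m 0) fun l u => (1 + levelMass z a l u) / lam u

variable {lam : ℕ → ℝ} {R r : ℝ}

lemma pertPhi_zero (hpos : ∀ x, 0 < lam x) (hr : 0 < r) (t : ℝ) (z : ι → Fin (N + 1) × ℕ)
    (a : ι → ℂ) (i u : ℕ) : pertPhi lam r t z a 0 i u = kerPhi lam r t (0 - (i : ℤ)) u := by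
  have hsucc := kerPhi_succ hpos hr t (0 - (i : ℤ) - 1) u
  rw [sub_add_cancel, sum_eq_zero fun y _ => by
    rw [kerPhi_of_neg lam hr.le t (by lia), zero_div], sub_zero] at hsucc
  exact hsucc.symm

lemma pertPhi_succ (lam : ℕ → ℝ) (r t : ℝ) (z : ι → Fin (N + 1) × ℕ) (a : ι → ℂ) (l i u : ℕ) :
    pertPhi lam r t z a (l + 1) i u = kerPhi lam r t ((l + 1 : ℕ) - (i : ℤ)) 0
      - ∑ y ∈ range u, pertPhi lam r t z a l i y * (1 + levelMass z a l y) / lam y := by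
  simp only [mul_div_assoc]
  rfl

lemma pertPhi_mul_one_add_of_eq (hpos : ∀ x, 0 < lam x) (hR : ∀ x, lam x < R) (t : ℝ)
    (z : ι → Fin (N + 1) × ℕ) (a : ι → ℂ) {l i u : ℕ}
    (h : pertPhi lam r t z a l i u = kerPhi lam r t ((l : ℤ) - i) u
      - ∑ c, if (z c).1 < l then pertPhi lam r t z a (z c).1 i (z c).2 * a c *
          kerTrans lam R (l - (z c).1) (z c).2 u else 0) :
    pertPhi lam r t z a l i u * (1 + levelMass z a l u)
      = kerPhi lam r t ((l : ℤ) - i) u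
      - ∑ c, if (z c).1 ≤ l then pertPhi lam r t z a (z c).1 i (z c).2 * a c *
          kerTrans lam R (l - (z c).1) (z c).2 u else 0 := by
  rw [mul_add, mul_one, levelMass, mul_sum]
  nth_rw 1 [h]
  rw [sub_add, sub_right_inj, ← sum_sub_distrib]
  refine sum_congr rfl fun c _ => ?_
  generalize (z c).2 = v
  generalize ((z c).1 : ℕ) = m
  rcases lt_trichotomy m l with hc | rfl | hc
  · simp [hc, hc.le, hc.ne]
  · rw [Nat.sub_self, kerTrans_zero hpos hR]
    by_cases hu : u = v
    · subst hu
      simp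
    · simp [hu, Ne.symm hu]
  · simp [hc.not_gt, hc.not_ge, hc.ne']

lemma pertPhi_eq (hpos : ∀ x, 0 < lam x) (hR : ∀ x, lam x < R) (hr : 0 < r) (t : ℝ)
    (z : ι → Fin (N + 1) × ℕ) (a : ι → ℂ) (l i u : ℕ) :
    pertPhi lam r t z a l i u = kerPhi lam r t ((l : ℤ) - i) u
      - ∑ c, if (z c).1 < l then pertPhi lam r t z a (z c).1 i (z c).2 * a c *
          kerTrans lam R (l - (z c).1) (z c).2 u else 0 := by
  induction l generalizing u with
  | zero => simp [pertPhi_zero hpos hr]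
  | succ l ih =>
    have hsucc := kerPhi_succ hpos hr t ((l : ℤ) - i) u
    rw [show (l : ℤ) - i + 1 = ((l + 1 : ℕ) : ℤ) - i by push_cast; ring] at hsucc
    rw [pertPhi_succ, sum_congr rfl fun y _ => by
      rw [pertPhi_mul_one_add_of_eq hpos hR t z a (ih y), sub_div, sum_div], sum_sub_distrib,
      ← sub_add, ← hsucc, sum_comm, sub_eq_add_neg (kerPhi lam r t _ u), ← sum_neg_distrib]
    refine congr_arg _ (sum_congr rfl fun c _ => ?_)
    by_cases hc : (z c).1 ≤ l
    · simp only [hc, Nat.lt_succ_of_le hc, if_true, mul_div_assoc]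
      rw [Nat.succ_sub hc, kerTrans_succ hpos hR, ← mul_sum, mul_neg, neg_neg]
    · simp [hc]

lemma pertPhi_mul_one_add (hpos : ∀ x, 0 < lam x) (hR : ∀ x, lam x < R) (hr : 0 < r) (t : ℝ)
    (z : ι → Fin (N + 1) × ℕ) (a : ι → ℂ) (i u : ℕ) :
    pertPhi lam r t z a N i u * (1 + levelMass z a N u)
      = kerPhi lam r t ((N : ℤ) - i) u
      - ∑ c, pertPhi lam r t z a (z c).1 i (z c).2 * a c *
          kerTrans lam R (N - (z c).1) (z c).2 u := by
  rw [pertPhi_mul_one_add_of_eq hpos hR t z a (pertPhi_eq hpos hR hr t z a N i u)]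
  simp only [Fin.is_le, if_true]

end PerturbedLevels

section SiteMatrices

variable {ι : Type*} {N : ℕ}

/-- The kernel `Kker` restricted to the sites `z`, with the levels counted from `0`. -/
noncomputable def siteKernel (lam : ℕ → ℝ) (R r t : ℝ) (z : ι → Fin (N + 1) × ℕ) : Matrix ι ι ℂ :=
  Matrix.of fun c d => Kker lam R r t ((z c).1 + 1) (z c).2 ((z d).1 + 1) (z d).2

/-- The functions `kerPsi` evaluated at the sites `z`. -/
noncomputable def sitePsi (lam : ℕ → ℝ) (R t : ℝ) (z : ι → Fin (N + 1) × ℕ) :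
    Matrix ι (Fin (N + 1)) ℂ :=
  Matrix.of fun c j => kerPsi lam R t (((z c).1 : ℕ) - (j : ℕ)) (z c).2

/-- The functions `kerPhi` evaluated at the sites `z`. -/
noncomputable def sitePhi (lam : ℕ → ℝ) (r t : ℝ) (z : ι → Fin (N + 1) × ℕ) :
    Matrix (Fin (N + 1)) ι ℂ :=
  Matrix.of fun j c => kerPhi lam r t (((z c).1 : ℕ) - (j : ℕ)) (z c).2

/-- The transition part `kerTrans` of the kernel at the sites `z`. -/
noncomputable def siteTrans (lam : ℕ → ℝ) (R : ℝ) (z : ι → Fin (N + 1) × ℕ) : Matrix ι ι ℂ :=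
  Matrix.of fun c d =>
    if (z c).1 < (z d).1 then kerTrans lam R ((z d).1 - (z c).1) (z c).2 (z d).2 else 0

variable {lam : ℕ → ℝ} {R r : ℝ}

lemma siteKernel_eq (hpos : ∀ x, 0 < lam x) (hR : ∀ x, lam x < R) (hr : 0 < r) (t : ℝ)
    (z : ι → Fin (N + 1) × ℕ) :
    siteKernel lam R r t z = siteTrans lam R z + sitePsi lam R t z * sitePhi lam r t z :=
  Matrix.ext fun _ d => Kker_succ_succ_eq_sum hpos hR hr t (z d).1.is_le _ _

lemma det_one_add_of_level_lt {A α : Type*} [CommRing A] [LinearOrder α] [Fintype ι] [DecidableEq ι]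
    (lev : ι → α) {B : Matrix ι ι A} (h : ∀ i j, lev j ≤ lev i → B i j = 0) : (1 + B).det = 1 := by
  have hT : (1 + B).BlockTriangular lev := fun i j hij => by
    rw [Matrix.add_apply, h i j hij.le, Matrix.one_apply_ne (by rintro rfl; exact hij.false),
      add_zero]
  rw [hT.det]
  refine prod_eq_one fun k _ => ?_
  have hblock : (1 + B).toSquareBlock lev k = 1 := by
    ext i j
    rw [Matrix.toSquareBlock_def, Matrix.of_apply, Matrix.add_apply,
      h i j (j.2.trans i.2.symm).le, add_zero, Matrix.one_apply, Matrix.one_apply]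
    exact if_congr Subtype.ext_iff.symm rfl rfl
  rw [hblock, Matrix.det_one]

variable [Fintype ι]

/-- The perturbed level functions evaluated at the sites `z`. -/
noncomputable def sitePertPhi (lam : ℕ → ℝ) (r t : ℝ) (z : ι → Fin (N + 1) × ℕ) (a : ι → ℂ) :
    Matrix (Fin (N + 1)) ι ℂ :=
  Matrix.of fun j c => pertPhi lam r t z a (z c).1 j (z c).2

variable [DecidableEq ι]

lemma sitePertPhi_mul_one_add (hpos : ∀ x, 0 < lam x) (hR : ∀ x, lam x < R) (hr : 0 < r) (t : ℝ)
    (z : ι → Fin (N + 1) × ℕ) (a : ι → ℂ) :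
    sitePertPhi lam r t z a * (1 + Matrix.diagonal a * siteTrans lam R z) = sitePhi lam r t z := by
  rw [Matrix.mul_add, Matrix.mul_one]
  ext j c
  rw [Matrix.add_apply, Matrix.mul_apply]
  simp only [Matrix.diagonal_mul, sitePertPhi, sitePhi, siteTrans, Matrix.of_apply, mul_ite,
    mul_zero, ← mul_assoc]
  rw [pertPhi_eq hpos hR hr t z a (z c).1 j (z c).2]
  exact sub_add_cancel _ _

lemma det_one_add_sitePertPhi_mul (hpos : ∀ x, 0 < lam x) (hR : ∀ x, lam x < R) (hr : 0 < r)
    (t : ℝ) (z : ι → Fin (N + 1) × ℕ) (a : ι → ℂ) :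
    (1 + sitePertPhi lam r t z a * (Matrix.diagonal a * sitePsi lam R t z)).det
      = (1 + Matrix.diagonal a * siteKernel lam R r t z).det := by
  have hfactor : 1 + Matrix.diagonal a * siteKernel lam R r t z
      = (1 + Matrix.diagonal a * sitePsi lam R t z * sitePertPhi lam r t z a) *
        (1 + Matrix.diagonal a * siteTrans lam R z) := by
    rw [add_mul, one_mul, Matrix.mul_assoc _ (sitePertPhi lam r t z a),
      sitePertPhi_mul_one_add hpos hR hr, siteKernel_eq hpos hR hr, mul_add, Matrix.mul_assoc,
      add_assoc]
  have htrans : (1 + Matrix.diagonal a * siteTrans lam R z).det = 1 :=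
    det_one_add_of_level_lt (fun c => (z c).1) fun c d h => by
      rw [Matrix.diagonal_mul, siteTrans, Matrix.of_apply, if_neg h.not_gt, mul_zero]
  rw [hfactor, Matrix.det_mul, htrans, mul_one, Matrix.det_one_add_mul_comm]

lemma hasSum_pertPhi_mul_kerPsi (hpos : ∀ x, 0 < lam x) (hR : ∀ x, lam x < R) (hr : 0 < r) (t : ℝ)
    (z : ι → Fin (N + 1) × ℕ) (a : ι → ℂ) (i j : Fin (N + 1)) :
    HasSum (fun x => pertPhi lam r t z a N i x *
        ((1 + levelMass z a N x) * kerPsi lam R t ((N : ℤ) - (j : ℕ)) x))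
      ((1 + sitePertPhi lam r t z a * (Matrix.diagonal a * sitePsi lam R t z) : Matrix _ _ ℂ)
        i j) := by
  have hmain := hasSum_kerPhi_mul_kerPsi hpos hR hr t (N - i) (N - j)
  have hsites := hasSum_sum (s := univ) fun (c : ι) _ =>
    (hasSum_kerTrans_mul_kerPsi hpos hR t (N - (z c).1) (z c).2 (N - j)).mul_left
      (pertPhi lam r t z a (z c).1 i (z c).2 * a c)
  have hfun : ∀ x, pertPhi lam r t z a N i x *
        ((1 + levelMass z a N x) * kerPsi lam R t ((N : ℤ) - (j : ℕ)) x)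
      = kerPhi lam r t (N - i : ℕ) x * kerPsi lam R t (N - j : ℕ) x
        - ∑ c, pertPhi lam r t z a (z c).1 i (z c).2 * a c *
          (kerTrans lam R (N - (z c).1) (z c).2 x * kerPsi lam R t (N - j : ℕ) x) := fun x => by
    rw [← mul_assoc, pertPhi_mul_one_add hpos hR hr, sub_mul, sum_mul, Nat.cast_sub i.is_le,
      Nat.cast_sub j.is_le]
    simp only [mul_assoc]
  have hval : (1 + sitePertPhi lam r t z a * (Matrix.diagonal a * sitePsi lam R t z) :
        Matrix _ _ ℂ) i j
      = (if N - (i : ℕ) = N - j then 1 else 0) - ∑ c, pertPhi lam r t z a (z c).1 i (z c).2 * a c *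
          -kerPsi lam R t ((N - j : ℕ) - (N - (z c).1 : ℕ)) (z c).2 := by
    rw [Matrix.add_apply, Matrix.one_apply, sub_eq_add_neg, ← sum_neg_distrib, Matrix.mul_apply]
    refine congrArg₂ _ (if_congr (by rw [Fin.ext_iff]; lia) rfl rfl) (sum_congr rfl fun c _ => ?_)
    have hc := (z c).1.is_le
    rw [show ((N - j : ℕ) : ℤ) - (N - (z c).1 : ℕ) = ((z c).1 : ℕ) - (j : ℕ) by lia,
      Matrix.diagonal_mul, mul_neg, neg_neg, mul_assoc]
    rfl
  rw [funext hfun, hval]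
  exact hmain.sub hsites

end SiteMatrices

/-! ### Andréief's identity -/

section Andreief

variable {n : ℕ} {α 𝕜 : Type*} [RCLike 𝕜]

lemma hasSum_fst_mul_snd {β : Type*} {f : α → 𝕜} {g : β → 𝕜} {s t : 𝕜} (hf : HasSum f s)
    (hg : HasSum g t) : HasSum (fun p : α × β => f p.1 * g p.2) (s * t) :=
  hf.mul hg (summable_mul_of_summable_norm hf.summable.norm hg.summable.norm)

lemma hasSum_pi_prod {h : Fin n → α → 𝕜} {S : Fin n → 𝕜} (hS : ∀ i, HasSum (h i) (S i)) :
    HasSum (fun y : Fin n → α => ∏ i, h i (y i)) (∏ i, S i) := by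
  induction n with
  | zero => simp
  | succ n ih =>
    have htail := ih fun i => hS i.succ
    have hmul := hasSum_fst_mul_snd (hS 0) htail
    rw [← (Fin.consEquiv fun _ => α).hasSum_iff, Fin.prod_univ_succ]
    convert hmul using 2 with p
    simp [Fin.prod_univ_succ]

lemma hasSum_det_mul_prod {f g : Fin n → α → 𝕜} {G : Matrix (Fin n) (Fin n) 𝕜}
    (hG : ∀ i j, HasSum (fun u => f i u * g j u) (G i j)) :
    HasSum (fun y : Fin n → α => (Matrix.of fun i j => f i (y j)).det * ∏ j, g j (y j)) G.det := by
  simp only [Matrix.det_apply', sum_mul, Matrix.of_apply, mul_assoc, ← prod_mul_distrib]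
  exact hasSum_sum fun σ _ => (hasSum_pi_prod fun j => hG (σ j) j).mul_left _

lemma sum_perm_det_mul_prod {A : Type*} [CommRing A] (f g : Fin n → α → A) (x : Fin n → α) :
    ∑ σ : Equiv.Perm (Fin n), (Matrix.of fun i j => f i (x (σ j))).det * ∏ j, g j (x (σ j))
      = (Matrix.of fun i j => f i (x j)).det * (Matrix.of fun i j => g i (x j)).det := by
  rw [← Matrix.det_transpose (Matrix.of fun i j => g i (x j)),
    Matrix.det_apply' (Matrix.transpose _), mul_sum]
  refine sum_congr rfl fun σ _ => ?_
  have hperm : (Matrix.of fun i j => f i (x (σ j))).det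
      = Equiv.Perm.sign σ * (Matrix.of fun i j => f i (x j)).det :=
    Matrix.det_permute' σ (Matrix.of fun i j => f i (x j))
  simp only [hperm, Matrix.transpose_apply, Matrix.of_apply]
  ring

variable [LinearOrder α]

lemma injective_strictMono_comp_perm :
    Function.Injective fun p : {x : Fin n → α // StrictMono x} × Equiv.Perm (Fin n) =>
      p.1.1 ∘ p.2 := by
  rintro ⟨⟨x, hx⟩, σ⟩ ⟨⟨x', hx'⟩, σ'⟩ (h : x ∘ σ = x' ∘ σ')
  obtain rfl : x = x' := by
    rw [← hx.range_inj hx', ← σ.surjective.range_comp x, h, σ'.surjective.range_comp]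
  obtain rfl : σ = σ' := Equiv.ext fun i => hx.injective (congrFun h i)
  rfl

lemma exists_strictMono_comp_perm {y : Fin n → α} (hy : Function.Injective y) :
    ∃ p : {x : Fin n → α // StrictMono x} × Equiv.Perm (Fin n), p.1.1 ∘ p.2 = y :=
  ⟨(⟨y ∘ Tuple.sort y, (Tuple.monotone_sort y).strictMono_of_injective
    (hy.comp (Tuple.sort y).injective)⟩, (Tuple.sort y)⁻¹), by ext; simp⟩

lemma hasSum_det_mul_det {f g : Fin n → α → 𝕜} {G : Matrix (Fin n) (Fin n) 𝕜}
    (hG : ∀ i j, HasSum (fun u => f i u * g j u) (G i j)) :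
    HasSum (fun x : {x : Fin n → α // StrictMono x} => (Matrix.of fun i j => f i (x.1 j)).det *
      (Matrix.of fun i j => g i (x.1 j)).det) G.det := by
  have hall := hasSum_det_mul_prod hG
  rw [← injective_strictMono_comp_perm.hasSum_iff] at hall
  · refine hall.prod_fiberwise fun x => ?_
    rw [← sum_perm_det_mul_prod]
    exact hasSum_fintype _
  · intro y hy
    obtain ⟨i, j, hij, hne⟩ := Function.not_injective_iff.1
      fun hinj => hy (exists_strictMono_comp_perm hinj)
    rw [Matrix.det_zero_of_column_eq hne fun k => by simp [hij], zero_mul]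

end Andreief

/-! ### Generating function of the correlations -/

section MassProd

variable {ι : Type*} [Fintype ι] {N : ℕ}

/-- The product over all entries of a pattern of one plus the mass they carry, the generating
function of the occupied sites among `z`. -/
noncomputable def massProd (z : ι → Fin (N + 1) × ℕ) (a : ι → ℂ) (X : GTpat N) : ℂ :=
  ∏ m : Fin (N + 1), ∏ j, (1 + levelMass z a m (X m j))

lemma massProd_of_isEmpty [IsEmpty ι] (z : ι → Fin (N + 1) × ℕ) (a : ι → ℂ) (X : GTpat N) :
    massProd z a X = 1 := by
  simp [massProd, levelMass]

variable {lam : ℕ → ℝ} {R r : ℝ}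

lemma dens_mul_massProd_eq (hpos : ∀ x, 0 < lam x) (hR : ∀ x, lam x < R) (t : ℝ)
    (z : ι → Fin (N + 1) × ℕ) (a : ι → ℂ) {x : Fin (N + 1) → ℕ} (X : GTWithTop x) :
    dens lam R t N X.1 * massProd z a X.1
      = levelWeight (fun l u => (1 + levelMass z a l u) / lam u) X.1 *
        (Matrix.of fun i j : Fin (N + 1) => (1 + levelMass z a N (x j)) *
          kerPsi lam R t ((N : ℤ) - (i : ℕ)) (x j)).det := by
  obtain ⟨X, hX, hx⟩ := X
  have hdens : dens lam R t N X
      = (Matrix.of fun i j : Fin (N + 1) => kerPsi lam R t ((N : ℤ) - (i : ℕ)) (x j)).det *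
        ∏ m : Fin N, ∏ i, (lam (X m.castSucc i) : ℂ)⁻¹ := by
    subst hx
    exact dens_eq hpos hR t hX
  have hmass : massProd z a X = (∏ m : Fin N, ∏ j, (1 + levelMass z a m (X m.castSucc j))) *
      ∏ j, (1 + levelMass z a N (x j)) := by
    subst hx
    exact Fin.prod_univ_castSucc _
  have hcols := Matrix.det_mul_row (fun j => 1 + levelMass z a N (x j))
    (Matrix.of fun i j : Fin (N + 1) => kerPsi lam R t ((N : ℤ) - (i : ℕ)) (x j))
  simp only [Matrix.of_apply] at hcols
  rw [hdens, hmass, hcols, levelWeight]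
  simp only [div_eq_mul_inv, prod_mul_distrib]
  ring

lemma tsum_dens_mul_massProd (hpos : ∀ x, 0 < lam x) (hR : ∀ x, lam x < R) (hr : 0 < r) (t : ℝ)
    (z : ι → Fin (N + 1) × ℕ) (a : ι → ℂ) {x : Fin (N + 1) → ℕ} (hx : StrictMono x) :
    ∑' X : GTWithTop x, dens lam R t N X.1 * massProd z a X.1
      = (Matrix.of fun i j : Fin (N + 1) => pertPhi lam r t z a N i (x j)).det *
        (Matrix.of fun i j : Fin (N + 1) => (1 + levelMass z a N (x j)) *
          kerPsi lam R t ((N : ℤ) - (i : ℕ)) (x j)).det := by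
  have := finite_GTWithTop hx
  cases nonempty_fintype (GTWithTop x)
  have hweights := sum_levelWeight (fun m hm => kerPhi_of_neg lam hr.le t hm 0)
    (kerPhi_zero_zero lam hr t) (fun l u => (1 + levelMass z a l u) / (lam u : ℂ)) hx
  rw [tsum_fintype, pertPhi, ← hweights, sum_mul]
  exact sum_congr rfl fun X _ => dens_mul_massProd_eq hpos hR t z a X

variable [DecidableEq ι]

lemma hasSum_tsum_dens_mul_massProd (hpos : ∀ x, 0 < lam x) (hR : ∀ x, lam x < R) (hr : 0 < r)
    (t : ℝ) (z : ι → Fin (N + 1) × ℕ) (a : ι → ℂ) :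
    HasSum (fun x : {x : Fin (N + 1) → ℕ // StrictMono x} =>
        ∑' X : GTWithTop x.1, dens lam R t N X.1 * massProd z a X.1)
      (1 + Matrix.diagonal a * siteKernel lam R r t z).det := by
  rw [← det_one_add_sitePertPhi_mul hpos hR hr t z a,
    funext fun x : {x : Fin (N + 1) → ℕ // StrictMono x} =>
      tsum_dens_mul_massProd hpos hR hr t z a x.2]
  exact hasSum_det_mul_det (f := fun (i : Fin (N + 1)) u => pertPhi lam r t z a N i u)
    (g := fun (j : Fin (N + 1)) u => (1 + levelMass z a N u) *
      kerPsi lam R t ((N : ℤ) - (j : ℕ)) u) (hasSum_pertPhi_mul_kerPsi hpos hR hr t z a)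

/-- Grouping Gelfand–Tsetlin patterns by their top level. -/
def sigmaTopEquiv (N : ℕ) :
    (Σ x : {x : Fin (N + 1) → ℕ // StrictMono x}, GTWithTop x.1) ≃ {X : GTpat N // IsGT X} where
  toFun p := ⟨p.2.1, p.2.2.1⟩
  invFun X := ⟨⟨X.1 (Fin.last N), X.2.1 _⟩, X.1, X.2, rfl⟩
  left_inv p := Sigma.subtype_ext (Subtype.ext p.2.2.2) rfl
  right_inv _ := rfl

lemma summable_sigma_of_nonneg_of_finite {α : Type*} {β : α → Type*} [∀ x, Finite (β x)]
    {f : (Σ x, β x) → ℂ} (hf : ∀ p, 0 ≤ f p) (hsum : Summable fun x => ∑' y, f ⟨x, y⟩) :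
    Summable f := by
  have hre : ∀ p, f p = (f p).re := fun p => Complex.eq_re_of_ofReal_le (hf p)
  rw [funext hre, Complex.summable_ofReal,
    summable_sigma_of_nonneg fun p => (Complex.nonneg_iff.1 (hf p)).1]
  refine ⟨fun x => Summable.of_finite, ?_⟩
  simpa only [Complex.re_tsum Summable.of_finite] using (Complex.hasSum_re hsum.hasSum).summable

lemma summable_dens (hpos : ∀ x, 0 < lam x) (hR : ∀ x, lam x < R) {t : ℝ} (ht : 0 ≤ t) (N : ℕ) :
    Summable fun X : {X : GTpat N // IsGT X} => dens lam R t N X.1 := by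
  have (x : {x : Fin (N + 1) → ℕ // StrictMono x}) := finite_GTWithTop x.2
  rw [← (sigmaTopEquiv N).summable_iff]
  refine summable_sigma_of_nonneg_of_finite (fun p => dens_nonneg hpos hR ht p.2.2.1) ?_
  simpa only [massProd_of_isEmpty, mul_one] using!
    (hasSum_tsum_dens_mul_massProd hpos hR one_pos t Fin.elim0 Fin.elim0).summable

lemma hasSum_dens_mul_massProd (hpos : ∀ x, 0 < lam x) (hR : ∀ x, lam x < R) (hr : 0 < r) {t : ℝ}
    (ht : 0 ≤ t) (z : ι → Fin (N + 1) × ℕ) {a : ι → ℂ} (ha : ∀ X, IsGT X → ‖massProd z a X‖ ≤ 1) :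
    HasSum (fun X : {X : GTpat N // IsGT X} => dens lam R t N X.1 * massProd z a X.1)
      (1 + Matrix.diagonal a * siteKernel lam R r t z).det := by
  have (x : {x : Fin (N + 1) → ℕ // StrictMono x}) := finite_GTWithTop x.2
  have hsummable : Summable fun X : {X : GTpat N // IsGT X} =>
      dens lam R t N X.1 * massProd z a X.1 :=
    (summable_dens hpos hR ht N).norm.of_norm_bounded fun X => by
      rw [norm_mul]
      exact mul_le_of_le_one_right (norm_nonneg _) (ha X.1 X.2)
  rw [← (sigmaTopEquiv N).hasSum_iff]
  exact (hasSum_tsum_dens_mul_massProd hpos hR hr t z a).sigma_of_hasSum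
    (fun x => Summable.of_finite.hasSum) ((sigmaTopEquiv N).summable_iff.2 hsummable)

lemma hasSum_dens (hpos : ∀ x, 0 < lam x) (hR : ∀ x, lam x < R) {t : ℝ} (ht : 0 ≤ t) (N : ℕ) :
    HasSum (fun X : {X : GTpat N // IsGT X} => dens lam R t N X.1) 1 := by
  have hsum := hasSum_dens_mul_massProd (N := N) hpos hR one_pos ht (Fin.elim0 : Fin 0 → _)
    (a := Fin.elim0) fun X _ => by rw [massProd_of_isEmpty, norm_one]
  simpa only [massProd_of_isEmpty, mul_one, Matrix.det_isEmpty] using hsum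

end MassProd

/-! ### Inclusion–exclusion over the sites -/

section InclusionExclusion

lemma det_eq_sum_det_one_add {ι A : Type*} [Fintype ι] [DecidableEq ι] [CommRing A]
    (K : Matrix ι ι A) :
    K.det = ∑ S : Finset ι, (-1) ^ S.card *
      (1 + Matrix.diagonal (fun i => if i ∈ S then -1 else 0) * K).det := by
  set f := (Matrix.detRowAlternating (n := ι) (R := A)).toMultilinearMap
  set e : ι → ι → A := (1 : Matrix ι ι A)
  set k : ι → ι → A := K
  have hflip : ∀ S : Finset ι, S.piecewise (k - e) e
      = S.piecewise (fun i => (-1 : A) • S.piecewise (e - k) e i) (S.piecewise (e - k) e) := by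
    intro S
    refine piecewise_congr _ (fun i hi => ?_) fun i hi => (S.piecewise_eq_of_notMem _ _ hi).symm
    rw [S.piecewise_eq_of_mem _ _ hi, neg_one_smul, Pi.sub_apply, Pi.sub_apply, neg_sub]
  have hdiag : ∀ S : Finset ι, S.piecewise (e - k) e
      = (1 + Matrix.diagonal (fun i => if i ∈ S then -1 else 0) * K : Matrix ι ι A) := by
    intro S
    ext i j
    by_cases hi : i ∈ S
    · simpa [piecewise, hi] using sub_eq_add_neg (e i j) (k i j)
    · simp [piecewise, hi, e]
  calc K.det = f (k - e + e) := congrArg f (sub_add_cancel k e).symm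
    _ = ∑ S : Finset ι, f (S.piecewise (k - e) e) := f.map_add_univ _ _
    _ = ∑ S : Finset ι, (-1) ^ S.card * f (S.piecewise (e - k) e) :=
      sum_congr rfl fun S _ => by
        rw [hflip, f.map_piecewise_smul (fun _ => (-1 : A)), prod_const, smul_eq_mul]
    _ = _ := sum_congr rfl fun S _ => by rw [hdiag]; rfl

lemma prod_one_add_ite_of_injective {κ α A : Type*} [Fintype κ] [DecidableEq α] [CommSemiring A]
    {y : κ → α} (hy : Function.Injective y) (u : α) [Decidable (∃ j, y j = u)] (b : A) :
    ∏ j, (1 + if y j = u then b else 0) = 1 + b * if ∃ j, y j = u then 1 else 0 := by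
  by_cases h : ∃ j, y j = u
  · obtain ⟨j, rfl⟩ := h
    rw [Fintype.prod_eq_single j fun i hi => by rw [if_neg (hy.ne hi), add_zero],
      if_pos rfl, if_pos ⟨j, rfl⟩, mul_one]
  · simp [not_exists.1 h]

variable {ι : Type*} {N : ℕ}

/-- The indicator that the site `z c` is occupied by an entry of the pattern `X`. -/
noncomputable def occupation (z : ι → Fin (N + 1) × ℕ) (X : GTpat N) (c : ι) : ℂ :=
  if ∃ j, X (z c).1 j = (z c).2 then 1 else 0

variable [Fintype ι]

lemma one_add_levelMass_of_injective {z : ι → Fin (N + 1) × ℕ} (hz : Function.Injective z)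
    (a : ι → ℂ) (m : Fin (N + 1)) (u : ℕ) :
    1 + levelMass z a m u = ∏ c, (1 + if z c = (m, u) then a c else 0) := by
  have hsite : ∀ c, (((z c).1 : ℕ) = m ∧ (z c).2 = u) ↔ z c = (m, u) := fun c => by
    rw [Prod.ext_iff, Fin.ext_iff]
  simp only [levelMass, hsite]
  by_cases h : ∃ c, z c = (m, u)
  · obtain ⟨c, hc⟩ := h
    have hne : ∀ d, d ≠ c → z d ≠ (m, u) := fun d hd hzd => hd (hz (hzd.trans hc.symm))
    rw [Fintype.sum_eq_single c fun d hd => if_neg (hne d hd),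
      Fintype.prod_eq_single c fun d hd => by rw [if_neg (hne d hd), add_zero]]
  · simp [not_exists.1 h]

lemma massProd_eq_prod_occupation {z : ι → Fin (N + 1) × ℕ} (hz : Function.Injective z)
    (a : ι → ℂ) {X : GTpat N} (hX : IsGT X) :
    massProd z a X = ∏ c, (1 + a c * occupation z X c) := by
  simp only [massProd, one_add_levelMass_of_injective hz]
  rw [prod_congr rfl fun m _ => prod_comm, prod_comm]
  refine prod_congr rfl fun c _ => ?_
  rw [Fintype.prod_eq_single (z c).1 fun m hm => prod_eq_one fun j _ => by
    rw [if_neg fun h => hm (congrArg Prod.fst h).symm, add_zero], occupation]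
  refine Eq.trans (prod_congr rfl fun j _ => ?_)
    (prod_one_add_ite_of_injective (hX.1 (z c).1).injective (z c).2 (a c))
  exact congrArg _ (if_congr (by rw [Prod.ext_iff, eq_self, true_and, eq_comm]) rfl rfl)

variable {lam : ℕ → ℝ} {R r : ℝ} [DecidableEq ι]

lemma norm_massProd_le_one {z : ι → Fin (N + 1) × ℕ} (hz : Function.Injective z) (S : Finset ι)
    {X : GTpat N} (hX : IsGT X) :
    ‖massProd z (fun c => if c ∈ S then -1 else 0) X‖ ≤ 1 := by
  rw [massProd_eq_prod_occupation hz _ hX, norm_prod]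
  refine prod_le_one (fun _ _ => norm_nonneg _) fun c _ => ?_
  unfold occupation
  split_ifs <;> simp

lemma prod_occupation_eq_sum_massProd {z : ι → Fin (N + 1) × ℕ} (hz : Function.Injective z)
    {X : GTpat N} (hX : IsGT X) :
    ∏ c, occupation z X c
      = ∑ S : Finset ι, (-1) ^ S.card * massProd z (fun c => if c ∈ S then -1 else 0) X := by
  rw [← Matrix.det_diagonal, det_eq_sum_det_one_add]
  refine sum_congr rfl fun S _ => ?_
  rw [massProd_eq_prod_occupation hz _ hX, Matrix.diagonal_mul_diagonal, ← Matrix.diagonal_one,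
    Matrix.diagonal_add, Matrix.det_diagonal]

lemma hasSum_dens_mul_prod_occupation (hpos : ∀ x, 0 < lam x) (hR : ∀ x, lam x < R) (hr : 0 < r)
    {t : ℝ} (ht : 0 ≤ t) {z : ι → Fin (N + 1) × ℕ} (hz : Function.Injective z) :
    HasSum (fun X : {X : GTpat N // IsGT X} =>
        dens lam R t N X.1 * ∏ c, occupation z X.1 c)
      (siteKernel lam R r t z).det := by
  have hsum := hasSum_sum (s := univ) fun (S : Finset ι) _ =>
    (hasSum_dens_mul_massProd hpos hR hr ht z fun _ hX => norm_massProd_le_one hz S hX).mul_left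
      ((-1) ^ S.card)
  rw [← det_eq_sum_det_one_add] at hsum
  refine (congrArg (HasSum · _) (funext fun X => ?_)).mpr hsum
  rw [prod_occupation_eq_sum_massProd hz X.2, mul_sum]
  exact sum_congr rfl fun S _ => mul_left_comm _ _ _

lemma hasSum_dens_of_occupied (hpos : ∀ x, 0 < lam x) (hR : ∀ x, lam x < R) (hr : 0 < r)
    {t : ℝ} (ht : 0 ≤ t) {z : ι → Fin (N + 1) × ℕ} (hz : Function.Injective z) :
    HasSum (fun X : {X : GTpat N // IsGT X ∧ ∀ c, ∃ j, X (z c).1 j = (z c).2} =>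
        dens lam R t N X.1)
      (siteKernel lam R r t z).det := by
  classical
  set P : GTpat N → Prop := fun X => ∀ c, ∃ j, X (z c).1 j = (z c).2
  rw [← (Equiv.subtypeSubtypeEquivSubtypeInter IsGT P).hasSum_iff]
  refine (hasSum_subtype_iff_indicator (f := fun X : {X : GTpat N // IsGT X} =>
    dens lam R t N X.1) (s := {X | P X.1})).2 ?_
  refine (congrArg (HasSum · _) (funext fun X => ?_)).mpr
    (hasSum_dens_mul_prod_occupation hpos hR hr ht hz)
  by_cases hX : X ∈ {X : {X : GTpat N // IsGT X} | P X.1}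
  · have hocc : ∏ c, occupation z X.1 c = 1 := prod_eq_one fun c _ => if_pos (hX c)
    rw [Set.indicator_of_mem hX, hocc, mul_one]
  · obtain ⟨c, hc⟩ := not_forall.1 hX
    rw [Set.indicator_of_notMem hX, prod_eq_zero (mem_univ c) (if_neg hc), mul_zero]

end InclusionExclusion

theorem stmt_0_general (lam : ℕ → ℝ) (hpos : ∀ x, 0 < lam x) (R r : ℝ) (hR : ∀ x, lam x < R)
    (hr : 0 < r) (t : ℝ) (ht : 0 ≤ t) (N : ℕ) :
    (∀ X : {X : GTpat N // IsGT X}, 0 ≤ dens lam R t N X.1) ∧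
    HasSum (fun X : {X : GTpat N // IsGT X} => dens lam R t N X.1) 1 ∧
    ∀ (k : ℕ) (z : Fin k → Fin (N + 1) × ℕ), Function.Injective z →
      HasSum
        (fun X : {X : GTpat N // IsGT X ∧ ∀ i, ∃ j, X (z i).1 j = (z i).2} =>
          dens lam R t N X.1)
        (Matrix.of fun i j =>
          Kker lam R r t ((z i).1 + 1) (z i).2 ((z j).1 + 1) (z j).2).det :=
  ⟨fun X => dens_nonneg hpos hR ht X.2, hasSum_dens hpos hR ht N,
    fun _ _ hz => hasSum_dens_of_occupied hpos hR hr ht hz⟩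

/-- for the Gibbs measure M^t on Gelfand–Tsetlin patterns with N+1 ≥ 1
levels started from the densely packed configuration (𝔓_t applied to Δ_{N+1} on top,
links 𝔏 below), the density is nonnegative, has total mass 1, and the associated point
process has determinantal correlation functions with kernel K_t: for any k ≥ 1 and
distinct points z_1,…,z_k ∈ {1,…,N+1} × ℤ₊ (level recorded 0-based as an element of
Fin (N+1)), the probability that for every i the value (z i).2 occurs among the
coordinates of level (z i).1 equals det[K_t(z_i, z_j)]. -/
theorem stmt_0 (lam : ℕ → ℝ) (s M : ℝ) (hs : 0 < s)
    (hlb : ∀ x, s ≤ lam x) (hub : ∀ x, lam x ≤ M)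
    (R r : ℝ) (hR : M < R) (hr0 : 0 < r) (hrs : r < s)
    (t : ℝ) (ht : 0 ≤ t) (N : ℕ) :
    (∀ X : { X : GTpat N // IsGT X }, 0 ≤ dens lam R t N X.1) ∧
    HasSum (fun X : { X : GTpat N // IsGT X } => dens lam R t N X.1) 1 ∧
    ∀ (k : ℕ), 1 ≤ k → ∀ z : Fin k → Fin (N + 1) × ℕ, Function.Injective z →
      HasSum
        (fun X : { X : GTpat N //
            IsGT X ∧ ∀ i : Fin k, ∃ j : Fin (((z i).1 : ℕ) + 1), X ((z i).1) j = (z i).2 } =>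
          dens lam R t N X.1)
        ((Matrix.of fun i j : Fin k =>
          Kker lam R r t (((z i).1 : ℕ) + 1) ((z i).2)
            (((z j).1 : ℕ) + 1) ((z j).2)).det) :=
  have h := stmt_0_general lam (fun x => hs.trans_le (hlb x)) R r (fun x => (hub x).trans_lt hR)
    hr0 t ht N
  ⟨h.1, h.2.1, fun k _ z hz => h.2.2 k z hz⟩
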